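/- Fix k ∈ {1,…,p−1}, a level α ∈ (0,1), and let Λ̃_k = U_kᵀ B V_k where U_k, V_k are the k-th columns of U and V. Define the confidence set CI_k = {δ ∈ ℝ : min(S_{k,δ}, 1 − S_{k,δ}) > α/2}. Then P(Λ̃_k ∈ CI_k) = 1 − α; equivalently, P( α/2 < S_{k,Λ̃_k} < 1 − α/2 ) = 1 − α. -/

import Mathlib

open MeasureTheory ProbabilityTheory Matrix

/-!
Moving the `k`-th singular value of `Y` by `s`, with everything else in the singular value
decomposition kept, is the map `Y ↦ Y + s • u_k v_kᵀ`. Its Jacobian determinant is the ratio of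
`z ^ (N - p) * ∏ j ≠ k, |z² - d_j²|` at the new and at the old value of `d_k`, and the Gaussian
density changes only by the factor `exp (-(z - δ)² / (2σ²))` with `δ = u_kᵀ B v_k`, which the move
leaves unchanged. Hence the Gaussian law is stationary under the heat bath that redraws `d_k` from
the law with density proportional to the product of these factors, the other coordinates fixed.
The statistic `S_{k,δ}` is the tail probability of that law at `d_k`, so on redrawing `d_k` it
becomes the tail function of an atomless law evaluated at a sample, which is uniform on `(0, 1)`.
-/

open Polynomial
open scoped ENNReal Topology

section SingularValueDecomposition

variable {m : Type*} [Fintype m] {p : ℕ}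

/-- `IsSVD Y U d V` says that `Y = U D Vᵀ` is a thin singular value decomposition with
`D = diag d` sorted in decreasing order. -/
structure IsSVD (Y U : Matrix m (Fin p) ℝ) (d : Fin p → ℝ) (V : Matrix (Fin p) (Fin p) ℝ) :
    Prop where
  eq_mul : Y = U * diagonal d * Vᵀ
  left_orthonormal : Uᵀ * U = 1
  right_orthonormal : Vᵀ * V = 1
  antitone : Antitone d
  nonneg : ∀ i, 0 ≤ d i

/-- The singular value of `Y` with zero-based index `k`, in decreasing order. -/
noncomputable def singularValue (Y : Matrix m (Fin p) ℝ) (k : Fin p) : ℝ :=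
  Y.toEuclideanLin.singularValues k

theorem exists_orthogonal_extension {l : Type*} [Fintype l] [DecidableEq l] [DecidableEq m]
    (hcard : Fintype.card m = Fintype.card l) (W : Matrix m l ℝ) (s : Set l)
    (hW : ∀ i ∈ s, ∀ j ∈ s, (Wᵀ * W) i j = (1 : Matrix l l ℝ) i j) :
    ∃ Q : Matrix m l ℝ, Qᵀ * Q = 1 ∧ Q * Qᵀ = 1 ∧ ∀ i, ∀ j ∈ s, Q i j = W i j := by
  let v : l → EuclideanSpace ℝ m := fun j => WithLp.toLp 2 (W.col j)
  have hv : Orthonormal ℝ (s.domRestrict v) := by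
    rw [orthonormal_iff_ite]
    rintro ⟨i, hi⟩ ⟨j, hj⟩
    simpa [v, Matrix.mul_apply, Matrix.one_apply, PiLp.inner_apply, mul_comm] using hW i hi j hj
  obtain ⟨b, hb⟩ := hv.exists_orthonormalBasis_extension_of_card_eq (by simpa using hcard)
  have hQ : (of fun i j => b j i)ᵀ * (of fun i j => b j i) = (1 : Matrix l l ℝ) := by
    ext i j
    simpa [Matrix.mul_apply, Matrix.one_apply, PiLp.inner_apply, mul_comm] using
      orthonormal_iff_ite.1 b.orthonormal i j
  refine ⟨of fun i j => b j i, hQ,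
    (mul_eq_one_comm_of_card_eq _ _ _ hcard.symm).1 hQ, fun i j hj => ?_⟩
  simp [hb j hj, v]

theorem inner_apply_eigenvectorBasis {E F : Type*} [NormedAddCommGroup E] [InnerProductSpace ℝ E]
    [FiniteDimensional ℝ E] [NormedAddCommGroup F] [InnerProductSpace ℝ F] [FiniteDimensional ℝ F]
    (T : E →ₗ[ℝ] F) (hE : Module.finrank ℝ E = p) (i j : Fin p) :
    inner ℝ (T (T.isSymmetric_adjoint_comp_self.eigenvectorBasis hE i))
      (T (T.isSymmetric_adjoint_comp_self.eigenvectorBasis hE j)) =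
      if i = j then T.singularValues j ^ 2 else 0 := by
  rw [← LinearMap.adjoint_inner_right, ← LinearMap.comp_apply,
    LinearMap.IsSymmetric.apply_eigenvectorBasis, inner_smul_right,
    orthonormal_iff_ite.1 (OrthonormalBasis.orthonormal _) i j,
    LinearMap.sq_singularValues_fin _ hE]
  simp

theorem exists_orthonormal_gram_mul_eq_diagonal (Y : Matrix m (Fin p) ℝ) :
    ∃ V : Matrix (Fin p) (Fin p) ℝ, Vᵀ * V = 1 ∧
      (Y * V)ᵀ * (Y * V) = diagonal fun j => singularValue Y j ^ 2 := by
  have hp : Module.finrank ℝ (EuclideanSpace ℝ (Fin p)) = p := by simp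
  obtain ⟨b, hb⟩ : ∃ b : OrthonormalBasis (Fin p) ℝ (EuclideanSpace ℝ (Fin p)), ∀ i j,
      inner ℝ (Y.toEuclideanLin (b i)) (Y.toEuclideanLin (b j)) =
        if i = j then singularValue Y j ^ 2 else 0 :=
    ⟨_, inner_apply_eigenvectorBasis Y.toEuclideanLin hp⟩
  refine ⟨of fun i j => b j i, ?_, ?_⟩ <;> ext i j
  · simpa [Matrix.mul_apply, Matrix.one_apply, PiLp.inner_apply, mul_comm] using
      orthonormal_iff_ite.1 b.orthonormal i j
  · rw [diagonal_apply]
    convert! hb i j using 1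
    · simp [Matrix.mul_apply, PiLp.inner_apply, Matrix.toLpLin_apply, Matrix.mulVec,
        dotProduct, mul_comm]
    · split_ifs with h <;> simp [h]

theorem exists_isSVD (hp : p ≤ Fintype.card m) (Y : Matrix m (Fin p) ℝ) :
    ∃ U V, IsSVD Y U (singularValue Y) V := by
  classical
  obtain ⟨V, hV, hYV⟩ := exists_orthonormal_gram_mul_eq_diagonal Y
  let W : Matrix m (Fin p ⊕ Fin (Fintype.card m - p)) ℝ :=
    fromCols (Y * V * diagonal (singularValue Y)⁻¹) 0
  have hW : ∀ i ∈ Sum.inl '' {j | singularValue Y j ≠ 0},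
      ∀ j ∈ Sum.inl '' {j | singularValue Y j ≠ 0}, (Wᵀ * W) i j = (1 : Matrix _ _ ℝ) i j := by
    rintro _ ⟨i, hi, rfl⟩ _ ⟨j, hj, rfl⟩
    have hWW : (Wᵀ * W) (.inl i) (.inl j) =
        (singularValue Y i)⁻¹ * ((Y * V)ᵀ * (Y * V)) i j * (singularValue Y j)⁻¹ := by
      rw [Matrix.mul_apply, Matrix.mul_apply (M := (Y * V)ᵀ)]
      simp [W, -transpose_mul, Finset.mul_sum, Finset.sum_mul, mul_assoc, mul_left_comm]
    rw [hWW, hYV]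
    simp only [Set.mem_ofPred_eq] at hi
    rcases eq_or_ne i j with rfl | hij
    · simp [field]
    · simp [hij]
  obtain ⟨Q, hQ, -, hQW⟩ := exists_orthogonal_extension (by simp; omega) W _ hW
  have hUV : Q.toCols₁ * diagonal (singularValue Y) = Y * V := by
    ext i j
    rw [mul_diagonal]
    by_cases hj : singularValue Y j = 0
    · have hcol := congrFun₂ hYV j j
      simp only [Matrix.mul_apply (M := (Y * V)ᵀ), transpose_apply, diagonal_apply_eq, hj,
        ← sq] at hcol
      rw [zero_pow two_ne_zero, Finset.sum_eq_zero_iff_of_nonneg fun i _ => sq_nonneg _] at hcol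
      simpa [hj, eq_comm] using (hcol i (Finset.mem_univ i)).symm
    · simpa [W, hj] using congrArg (· * singularValue Y j) (hQW i (.inl j) ⟨j, hj, rfl⟩)
  refine ⟨Q.toCols₁, V, ?_, ?_, hV, ?_, fun i => Y.toEuclideanLin.singularValues_nonneg i⟩
  · rw [hUV, Matrix.mul_assoc, mul_eq_one_comm.1 hV, Matrix.mul_one]
  · ext i j
    simpa [Matrix.mul_apply, Matrix.one_apply] using congrFun₂ hQ (.inl i) (.inl j)
  · exact fun i j hij => Y.toEuclideanLin.singularValues_antitone hij

end SingularValueDecomposition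

section Weyl

variable {m : Type*} [Fintype m] {p : ℕ}
  {Y Y' U U' : Matrix m (Fin p) ℝ} {d d' : Fin p → ℝ} {V V' : Matrix (Fin p) (Fin p) ℝ}

theorem norm_toEuclideanLin_of_orthonormal {l n : Type*} [Fintype l] [Fintype n] [DecidableEq n]
    {Q : Matrix l n ℝ} (hQ : Qᵀ * Q = 1) (x : EuclideanSpace ℝ n) :
    ‖Q.toEuclideanLin x‖ = ‖x‖ := by
  rw [← sq_eq_sq₀ (norm_nonneg _) (norm_nonneg _), EuclideanSpace.real_norm_sq_eq,
    EuclideanSpace.real_norm_sq_eq]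
  calc ∑ i, Q.toEuclideanLin x i ^ 2 = (Q *ᵥ x.ofLp) ⬝ᵥ (Q *ᵥ x.ofLp) := by
        simp [dotProduct, toLpLin_apply, sq]
    _ = x.ofLp ⬝ᵥ x.ofLp := by
        rw [dotProduct_mulVec, vecMul_mulVec, ← dotProduct_mulVec, hQ, one_mulVec]
    _ = ∑ i, x i ^ 2 := by simp [dotProduct, sq]

namespace IsSVD

theorem norm_toEuclideanLin_sq (h : IsSVD Y U d V) (x : EuclideanSpace ℝ (Fin p)) :
    ‖Y.toEuclideanLin x‖ ^ 2 = ∑ j, d j ^ 2 * Vᵀ.toEuclideanLin x j ^ 2 := by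
  conv_lhs => rw [h.eq_mul]
  rw [toLpLin_mul (q := 2), toLpLin_mul (q := 2), LinearMap.comp_apply, LinearMap.comp_apply,
    norm_toEuclideanLin_of_orthonormal h.left_orthonormal, EuclideanSpace.real_norm_sq_eq]
  simp [toLpLin_apply, -mulVec_mulVec, mulVec_diagonal, mul_pow]

theorem norm_sq_eq_sum (h : IsSVD Y U d V) (x : EuclideanSpace ℝ (Fin p)) :
    ‖x‖ ^ 2 = ∑ j, Vᵀ.toEuclideanLin x j ^ 2 := by
  rw [← norm_toEuclideanLin_of_orthonormal (Q := Vᵀ)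
    (by simpa using mul_eq_one_comm.1 h.right_orthonormal), EuclideanSpace.real_norm_sq_eq]

theorem mul_norm_le_norm_toEuclideanLin (h : IsSVD Y U d V) {k : Fin p}
    {x : EuclideanSpace ℝ (Fin p)} (hx : ∀ j, k < j → Vᵀ.toEuclideanLin x j = 0) :
    d k * ‖x‖ ≤ ‖Y.toEuclideanLin x‖ := by
  refine le_of_sq_le_sq ?_ (norm_nonneg _)
  rw [mul_pow, h.norm_toEuclideanLin_sq, h.norm_sq_eq_sum, Finset.mul_sum]
  refine Finset.sum_le_sum fun j _ => ?_
  rcases lt_or_ge k j with hj | hj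
  · simp [hx j hj]
  · have := h.nonneg k
    gcongr
    exact h.antitone hj

theorem norm_toEuclideanLin_le (h : IsSVD Y U d V) {k : Fin p}
    {x : EuclideanSpace ℝ (Fin p)} (hx : ∀ j, j < k → Vᵀ.toEuclideanLin x j = 0) :
    ‖Y.toEuclideanLin x‖ ≤ d k * ‖x‖ := by
  refine le_of_sq_le_sq ?_ (mul_nonneg (h.nonneg k) (norm_nonneg _))
  rw [mul_pow, h.norm_toEuclideanLin_sq, h.norm_sq_eq_sum, Finset.mul_sum]
  refine Finset.sum_le_sum fun j _ => ?_
  rcases lt_or_ge j k with hj | hj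
  · simp [hx j hj]
  · have := h.nonneg j
    gcongr
    exact h.antitone hj

/-- Weyl's inequality: the vectors killed by the components `j > k` of one decomposition and
`j < k` of the other satisfy only `p - 1` linear equations. -/
theorem le_add_opNorm_sub (h : IsSVD Y U d V) (h' : IsSVD Y' U' d' V') (k : Fin p) :
    d k ≤ d' k + ‖(Y - Y').toEuclideanLin.toContinuousLinearMap‖ := by
  let f : EuclideanSpace ℝ (Fin p) →ₗ[ℝ] {j : Fin p // j ≠ k} → ℝ := LinearMap.pi fun j =>
    (EuclideanSpace.proj (𝕜 := ℝ) j.1).toLinearMap ∘ₗ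
      if k < j.1 then Vᵀ.toEuclideanLin else V'ᵀ.toEuclideanLin
  have hf : LinearMap.ker f ≠ ⊥ := LinearMap.ker_ne_bot_of_finrank_lt <| by
    simpa using k.pos
  obtain ⟨x, hx, hx0⟩ := Submodule.exists_mem_ne_zero_of_ne_bot hf
  have hfx (j : Fin p) (hj : j ≠ k) : f x ⟨j, hj⟩ = 0 := by rw [LinearMap.mem_ker.1 hx]; rfl
  have hV (j : Fin p) (hj : k < j) : Vᵀ.toEuclideanLin x j = 0 := by
    simpa [f, hj] using hfx j hj.ne'
  have hV' (j : Fin p) (hj : j < k) : V'ᵀ.toEuclideanLin x j = 0 := by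
    simpa [f, hj.not_gt] using hfx j hj.ne
  refine le_of_mul_le_mul_right ?_ (norm_pos_iff.2 hx0)
  calc d k * ‖x‖ ≤ ‖Y.toEuclideanLin x‖ := h.mul_norm_le_norm_toEuclideanLin hV
    _ = ‖Y'.toEuclideanLin x + (Y - Y').toEuclideanLin.toContinuousLinearMap x‖ := by simp
    _ ≤ ‖Y'.toEuclideanLin x‖ + ‖(Y - Y').toEuclideanLin.toContinuousLinearMap x‖ :=
        norm_add_le _ _
    _ ≤ d' k * ‖x‖ + ‖(Y - Y').toEuclideanLin.toContinuousLinearMap‖ * ‖x‖ :=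
        add_le_add (h'.norm_toEuclideanLin_le hV') (ContinuousLinearMap.le_opNorm _ _)
    _ = _ := by ring

theorem card_le (h : IsSVD Y U d V) : p ≤ Fintype.card m := by
  have h1 := rank_mul_le_right Uᵀ U
  rw [h.left_orthonormal, rank_one, Fintype.card_fin] at h1
  exact h1.trans (rank_le_card_height U)

theorem eq_singularValue (h : IsSVD Y U d V) : d = singularValue Y := by
  obtain ⟨U', V', h'⟩ := exists_isSVD h.card_le Y
  ext k
  apply le_antisymm
  · simpa using h.le_add_opNorm_sub h' k
  · simpa using h'.le_add_opNorm_sub h k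

end IsSVD

theorem exists_lipschitzWith_singularValue (hp : p ≤ Fintype.card m) :
    ∃ C, ∀ k, LipschitzWith C fun Y : m → Fin p → ℝ => singularValue (of Y) k := by
  let L : (m → Fin p → ℝ) →ₗ[ℝ] EuclideanSpace ℝ (Fin p) →L[ℝ] EuclideanSpace ℝ m :=
    LinearMap.toContinuousLinearMap.toLinearMap ∘ₗ toEuclideanLin.toLinearMap ∘ₗ
      (ofLinearEquiv ℝ).toLinearMap
  refine ⟨‖L.toContinuousLinearMap‖₊, fun k => LipschitzWith.of_le_add_mul _ fun Y Y' => ?_⟩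
  obtain ⟨U, V, h⟩ := exists_isSVD hp (of Y)
  obtain ⟨U', V', h'⟩ := exists_isSVD hp (of Y')
  refine (h.le_add_opNorm_sub h' k).trans ?_
  gcongr
  rw [dist_eq_norm]
  exact L.toContinuousLinearMap.le_opNorm (Y - Y')

end Weyl

section SimpleLocus

variable {m : Type*} [Fintype m] {p : ℕ}

namespace IsSVD

variable {Y U : Matrix m (Fin p) ℝ} {d : Fin p → ℝ} {V : Matrix (Fin p) (Fin p) ℝ}

theorem singularValue_mul_diagonal_mul (h : IsSVD Y U d V) {d' : Fin p → ℝ}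
    (hanti : Antitone d') (hnonneg : ∀ i, 0 ≤ d' i) :
    singularValue (U * diagonal d' * Vᵀ) = d' :=
  (IsSVD.mk rfl h.left_orthonormal h.right_orthonormal hanti hnonneg).eq_singularValue.symm

theorem add_smul_eq (h : IsSVD Y U d V) (t : ℝ) (e : Fin p → ℝ) :
    Y + t • (U * diagonal e * Vᵀ) = U * diagonal (d + t • e) * Vᵀ := by
  have hd : diagonal (d + t • e) = diagonal d + t • diagonal e := by
    simp [← diagonal_smul, diagonal_add, Pi.add_def]
  nth_rewrite 1 [h.eq_mul]
  simp [hd, Matrix.mul_add, Matrix.add_mul]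

theorem singularValue_add_smul_of_antitone (h : IsSVD Y U d V) {t : ℝ} (ht : 0 ≤ t)
    {e : Fin p → ℝ} (hanti : Antitone e) (hnonneg : ∀ i, 0 ≤ e i) :
    singularValue (Y + t • (U * diagonal e * Vᵀ)) = d + t • e := by
  rw [h.add_smul_eq]
  exact h.singularValue_mul_diagonal_mul
    (h.antitone.add fun i j hij => mul_le_mul_of_nonneg_left (hanti hij) ht)
    fun i => add_nonneg (h.nonneg i) (mul_nonneg ht (hnonneg i))

end IsSVD

theorem singularValue_antitone (Y : Matrix m (Fin p) ℝ) : Antitone (singularValue Y) :=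
  fun _ _ hij => Y.toEuclideanLin.singularValues_antitone hij

theorem singularValue_nonneg (Y : Matrix m (Fin p) ℝ) (k : Fin p) : 0 ≤ singularValue Y k :=
  Y.toEuclideanLin.singularValues_nonneg k

theorem continuous_singularValue (hp : p ≤ Fintype.card m) (k : Fin p) :
    Continuous fun Y : m → Fin p → ℝ => singularValue (of Y) k :=
  let ⟨_, hC⟩ := exists_lipschitzWith_singularValue hp
  (hC k).continuous

/-- At a tie the nonnegative function `σᵢ - σⱼ` is minimal, while it grows linearly when
`σ₀, …, σᵢ` are all increased by `t`; so it is not differentiable there. -/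
theorem not_differentiableAt_singularValue_sub (hp : p ≤ Fintype.card m) {i j : Fin p}
    (hij : i < j) {Y : m → Fin p → ℝ} (hY : singularValue (of Y) i = singularValue (of Y) j) :
    ¬ DifferentiableAt ℝ
      (fun Y : m → Fin p → ℝ => singularValue (of Y) i - singularValue (of Y) j) Y := by
  intro hdiff
  set g := fun Y : m → Fin p → ℝ => singularValue (of Y) i - singularValue (of Y) j with hg
  obtain ⟨U, V, h⟩ := exists_isSVD hp (of Y)
  let e : Fin p → ℝ := fun l => if l ≤ i then 1 else 0
  let E : m → Fin p → ℝ := U * diagonal e * Vᵀ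
  have hmin : IsLocalMin g Y :=
    Filter.Eventually.of_forall fun Y' => by
      simpa [hg, hY] using singularValue_antitone (of Y') hij.le
  have hline : HasDerivAt (fun t : ℝ => g (Y + t • E)) 0 0 := by
    have hcurve : HasDerivAt (fun t : ℝ => Y + t • E) E 0 := by
      simpa using ((hasDerivAt_id (0 : ℝ)).smul_const E).const_add Y
    have hfd := hdiff.hasFDerivAt
    rw [hmin.fderiv_eq_zero] at hfd
    have hfd' : HasFDerivAt g (0 : (m → Fin p → ℝ) →L[ℝ] ℝ) (Y + (0 : ℝ) • E) := by simpa using hfd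
    simpa [Function.comp_def] using hfd'.comp_hasDerivAt 0 hcurve
  have hgrow (t : ℝ) (ht : t ∈ Set.Ici 0) : g (Y + t • E) = t := by
    have hs : singularValue (of (Y + t • E)) = singularValue (of Y) + t • e := by
      refine h.singularValue_add_smul_of_antitone ht (fun a b hab => ?_) fun l => ?_
      · by_cases hb : b ≤ i <;> simp [e, hb, hab.trans, apply_ite]
      · simp only [e]; split_ifs <;> norm_num
    simp [hg, hs, hY, e, hij]
  have hwithin := (hasDerivWithinAt_id (0 : ℝ) (Set.Ici 0)).congr hgrow (hgrow 0 Set.self_mem_Ici)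
  exact zero_ne_one ((uniqueDiffOn_Ici (0 : ℝ) 0 Set.self_mem_Ici).eq_deriv _
    hline.hasDerivWithinAt hwithin)

theorem ae_singularValue_ne (hp : p ≤ Fintype.card m) {i j : Fin p} (hij : i < j) :
    ∀ᵐ Y : m → Fin p → ℝ, singularValue (of Y) i ≠ singularValue (of Y) j := by
  obtain ⟨C, hC⟩ := exists_lipschitzWith_singularValue (m := m) hp
  filter_upwards [((hC i).sub (hC j)).ae_differentiableAt] with Y hdiff hY
  exact not_differentiableAt_singularValue_sub hp hij hY hdiff

/-- The matrices whose singular value with index `k` is positive and simple. -/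
def simpleLocus (m : Type*) [Fintype m] (k : Fin p) : Set (m → Fin p → ℝ) :=
  {Y | 0 < singularValue (of Y) k ∧ ∀ j ≠ k, singularValue (of Y) j ≠ singularValue (of Y) k}

theorem isOpen_simpleLocus (hp : p ≤ Fintype.card m) (k : Fin p) : IsOpen (simpleLocus m k) := by
  simp only [simpleLocus, Set.ofPred_and, Set.ofPred_forall]
  exact (isOpen_lt continuous_const (continuous_singularValue hp k)).inter <|
    isOpen_iInter_of_finite fun j => isOpen_iInter_of_finite fun _ =>
      isOpen_ne_fun (continuous_singularValue hp j) (continuous_singularValue hp k)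

theorem ae_mem_simpleLocus (hp : p ≤ Fintype.card m) {k k' : Fin p} (hk : k < k') :
    ∀ᵐ Y, Y ∈ simpleLocus m k := by
  have hne : ∀ᵐ Y : m → Fin p → ℝ, ∀ j ≠ k, singularValue (of Y) j ≠ singularValue (of Y) k := by
    refine ae_all_iff.2 fun j => Filter.eventually_imp_distrib_left.2 fun hj => ?_
    rcases hj.lt_or_gt with hj | hj
    · exact ae_singularValue_ne hp hj
    · exact (ae_singularValue_ne hp hj).mono fun _ => Ne.symm
  filter_upwards [hne] with Y hY
  exact ⟨(singularValue_nonneg _ k').trans_lt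
    ((singularValue_antitone _ hk.le).lt_of_ne (hY k' hk.ne')), hY⟩

end SimpleLocus

section Component

variable {m : Type*} [Fintype m] {p : ℕ}

theorem eval_lagrange_basis_univ {ι : Type*} [Fintype ι] [DecidableEq ι] {v : ι → ℝ} {k : ι}
    (hv : ∀ j ≠ k, v j ≠ v k) (j : ι) :
    (Lagrange.basis Finset.univ v k).eval (v j) = (Pi.single k 1 : ι → ℝ) j := by
  rcases eq_or_ne j k with rfl | hj
  · rw [Pi.single_eq_same, Lagrange.basis, eval_prod]
    exact Finset.prod_eq_one fun i hi =>
      Lagrange.eval_basisDivisor_left_of_ne (hv i (Finset.ne_of_mem_erase hi)).symm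
  · rw [Pi.single_eq_of_ne hj, Lagrange.eval_basis_of_ne hj.symm (Finset.mem_univ j)]

/-- The polynomial `q` with `d_k q(d_k²) = 1` and `q(d_j²) = 0` for the other nodes. -/
noncomputable def componentPoly (d : Fin p → ℝ) (k : Fin p) : ℝ[X] :=
  C (d k)⁻¹ * Lagrange.basis Finset.univ (fun j => d j ^ 2) k

theorem mul_eval_componentPoly {d : Fin p → ℝ} (hd : ∀ i, 0 ≤ d i) {k : Fin p} (hk : 0 < d k)
    (hne : ∀ j ≠ k, d j ≠ d k) (j : Fin p) :
    d j * (componentPoly d k).eval (d j ^ 2) = (Pi.single k 1 : Fin p → ℝ) j := by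
  have hsq (i) (hi : i ≠ k) : d i ^ 2 ≠ d k ^ 2 := by
    rw [Ne, sq_eq_sq₀ (hd i) hk.le]
    exact hne i hi
  rw [componentPoly, eval_mul, eval_C, eval_lagrange_basis_univ hsq j]
  rcases eq_or_ne j k with rfl | hj
  · simp [hk.ne']
  · simp [hj]

/-- The component `u_k v_kᵀ` of the singular value decomposition of `Y`, written as a polynomial
in `Y` and `Yᵀ`; it is zero where the singular value `k` vanishes or is not simple. -/
noncomputable def svdComponent (k : Fin p) (Y : m → Fin p → ℝ) : m → Fin p → ℝ :=
  of.symm (of Y * aeval ((of Y)ᵀ * of Y) (componentPoly (singularValue (of Y)) k))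

theorem svdComponent_of_notMem {k : Fin p} {Y : m → Fin p → ℝ} (hY : Y ∉ simpleLocus m k) :
    svdComponent k Y = 0 := by
  have hq : componentPoly (singularValue (of Y)) k = 0 := by
    rw [componentPoly]
    by_cases hk : 0 < singularValue (of Y) k
    · obtain ⟨j, hj, hjk⟩ : ∃ j, j ≠ k ∧ singularValue (of Y) j = singularValue (of Y) k := by
        by_contra! hne
        exact hY ⟨hk, hne⟩
      rw [Lagrange.basis, Finset.prod_eq_zero (i := j) (by simp [hj]) (by simp [hjk]), mul_zero]
    · simp [le_antisymm (not_lt.1 hk) (singularValue_nonneg (of Y) k)]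
  rw [svdComponent, hq, map_zero, Matrix.mul_zero]
  rfl

namespace IsSVD

variable {U : Matrix m (Fin p) ℝ} {d : Fin p → ℝ} {V : Matrix (Fin p) (Fin p) ℝ}

theorem transpose_mul_self {Y : Matrix m (Fin p) ℝ} (h : IsSVD Y U d V) :
    Yᵀ * Y = V * diagonal (d ^ 2) * Vᵀ := by
  rw [h.eq_mul]
  simp only [transpose_mul, transpose_transpose, diagonal_transpose, Matrix.mul_assoc]
  rw [← Matrix.mul_assoc Uᵀ, h.left_orthonormal, Matrix.one_mul, ← Matrix.mul_assoc (diagonal d),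
    diagonal_mul_diagonal]
  simp only [← sq]
  rfl

theorem mul_aeval {Y : Matrix m (Fin p) ℝ} (h : IsSVD Y U d V) (q : ℝ[X]) :
    Y * aeval (Yᵀ * Y) q = U * diagonal (fun j => d j * q.eval (d j ^ 2)) * Vᵀ := by
  induction q using Polynomial.induction_on' with
  | add q r hq hr => simp only [map_add, Matrix.mul_add, hq, hr, eval_add, mul_add,
      ← diagonal_add, Matrix.add_mul]
  | monomial n a =>
    rw [aeval_monomial, Algebra.algebraMap_eq_smul_one, smul_mul_assoc, one_mul, Matrix.mul_smul]
    have hpow : Y * (Yᵀ * Y) ^ n = U * diagonal (fun j => d j * (d j ^ 2) ^ n) * Vᵀ := by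
      induction n with
      | zero => simpa using h.eq_mul
      | succ n ih =>
        rw [pow_succ, ← Matrix.mul_assoc, ih, h.transpose_mul_self, ← Matrix.mul_assoc,
          ← Matrix.mul_assoc, Matrix.mul_assoc _ Vᵀ V, h.right_orthonormal, Matrix.mul_one,
          Matrix.mul_assoc U, diagonal_mul_diagonal]
        simp [pow_succ, mul_assoc]
    rw [hpow, ← Matrix.smul_mul, ← Matrix.mul_smul, ← diagonal_smul]
    simp [Pi.smul_def, mul_left_comm]

theorem svdComponent_eq {Y : m → Fin p → ℝ} (h : IsSVD (of Y) U d V) {k : Fin p}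
    (hY : Y ∈ simpleLocus m k) :
    of (svdComponent k Y) = U * diagonal (Pi.single k (1 : ℝ)) * Vᵀ := by
  refine (h.mul_aeval _).trans ?_
  simp only [h.eq_singularValue, mul_eval_componentPoly (singularValue_nonneg _) hY.1 hY.2]

end IsSVD

/-- With `r₀(x) = x q₀(x²)` interpolating `δ_{jk}`, this is the `q` with
`x q(x²) = (5 r₀³ - 3 r₀⁵) / 2`: the same values, and vanishing derivative, at the nodes. -/
noncomputable def flatComponentPoly (d : Fin p → ℝ) (k : Fin p) : ℝ[X] :=
  C (5 / 2) * X * componentPoly d k ^ 3 - C (3 / 2) * X ^ 2 * componentPoly d k ^ 5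

theorem isLittleO_eval_flatComponentPoly {d : Fin p → ℝ} (hd : ∀ i, 0 ≤ d i) {k : Fin p}
    (hk : 0 < d k) (hne : ∀ j ≠ k, d j ≠ d k) (j : Fin p) :
    (fun x => x * (flatComponentPoly d k).eval (x ^ 2) - (Pi.single k 1 : Fin p → ℝ) j) =o[𝓝 (d j)]
      fun x => x - d j := by
  let s : ℝ → ℝ := fun r => (5 * r ^ 3 - 3 * r ^ 5) / 2
  have hs (r : ℝ) : HasDerivAt s ((5 * (3 * r ^ 2) - 3 * (5 * r ^ 4)) / 2) r := by
    simpa [s] using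
      (((hasDerivAt_pow 3 r).const_mul 5).sub ((hasDerivAt_pow 5 r).const_mul 3)).div_const 2
  obtain ⟨r', hr'⟩ : ∃ r', HasDerivAt (fun x => x * (componentPoly d k).eval (x ^ 2)) r' (d j) :=
    ⟨_, DifferentiableAt.hasDerivAt (by fun_prop)⟩
  have hvalue := mul_eval_componentPoly hd hk hne j
  have hcomp := (hs _).comp (d j) hr'
  rw [hvalue] at hcomp
  have hδ : (Pi.single k 1 : Fin p → ℝ) j = 0 ∨ (Pi.single k 1 : Fin p → ℝ) j = 1 := by
    rw [Pi.single_apply]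
    split_ifs <;> simp
  have hcomp0 : HasDerivAt (s ∘ fun x => x * (componentPoly d k).eval (x ^ 2)) 0 (d j) := by
    convert! hcomp using 1
    rcases hδ with hδ | hδ <;> rw [hδ] <;> norm_num
  refine hcomp0.isLittleO.congr_left fun x => ?_
  simp only [s, Function.comp_apply, hvalue, flatComponentPoly, eval_sub, eval_mul, eval_pow,
    eval_C, eval_X, smul_zero, sub_zero]
  rcases hδ with hδ | hδ <;> rw [hδ] <;> ring

theorem abs_apply_le_one_of_orthonormal {l n : Type*} [Fintype l] [DecidableEq n]
    {Q : Matrix l n ℝ} (hQ : Qᵀ * Q = 1) (i : l) (j : n) : |Q i j| ≤ 1 := by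
  have hcol : ∑ a, Q a j ^ 2 = 1 := by
    simpa [Matrix.mul_apply, sq] using congrFun₂ hQ j j
  rw [← sq_le_one_iff_abs_le_one, ← hcol]
  exact Finset.single_le_sum (f := fun a => Q a j ^ 2) (fun a _ => sq_nonneg _) (Finset.mem_univ i)

theorem IsSVD.norm_mul_diagonal_mul_le {Y U : Matrix m (Fin p) ℝ} {d : Fin p → ℝ}
    {V : Matrix (Fin p) (Fin p) ℝ} (h : IsSVD Y U d V) (e : Fin p → ℝ) :
    ‖of.symm (U * diagonal e * Vᵀ)‖ ≤ ∑ l, |e l| := by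
  have hsum : 0 ≤ ∑ l, |e l| := Finset.sum_nonneg fun _ _ => abs_nonneg _
  refine (pi_norm_le_iff_of_nonneg hsum).2 fun i => (pi_norm_le_iff_of_nonneg hsum).2 fun j => ?_
  rw [of_symm_apply, Matrix.mul_apply, Real.norm_eq_abs]
  refine (Finset.abs_sum_le_sum_abs _ _).trans (Finset.sum_le_sum fun l _ => ?_)
  have hU := abs_apply_le_one_of_orthonormal h.left_orthonormal i l
  have hV := abs_apply_le_one_of_orthonormal h.right_orthonormal j l
  rw [mul_diagonal, transpose_apply, abs_mul, abs_mul]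
  calc |U i l| * |e l| * |V j l| ≤ 1 * |e l| * 1 := by gcongr
    _ = |e l| := by ring

theorem differentiable_matrix_mul {E l n o : Type*} [NormedAddCommGroup E] [NormedSpace ℝ E]
    [Finite l] [Fintype n] [Finite o] {M : E → l → n → ℝ} {N : E → n → o → ℝ}
    (hM : Differentiable ℝ M) (hN : Differentiable ℝ N) :
    Differentiable ℝ fun x => of.symm (of (M x) * of (N x)) := by
  have := Fintype.ofFinite l
  have := Fintype.ofFinite o
  refine differentiable_pi.2 fun i => differentiable_pi.2 fun j => ?_
  simp only [of_symm_apply, Matrix.mul_apply, of_apply]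
  fun_prop

theorem differentiable_mul_aeval (q : ℝ[X]) :
    Differentiable ℝ fun Y : m → Fin p → ℝ =>
      of.symm (of Y * aeval ((of Y)ᵀ * of Y) q) := by
  have hgram : Differentiable ℝ fun Y : m → Fin p → ℝ => of.symm ((of Y)ᵀ * of Y) := by
    refine differentiable_matrix_mul (M := fun (Y : m → Fin p → ℝ) i j => Y j i) ?_
      differentiable_fun_id
    fun_prop
  induction q using Polynomial.induction_on' with
  | add q r hq hr =>
    simp only [map_add, Matrix.mul_add]
    exact hq.add hr
  | monomial n a =>
    simp only [aeval_monomial, Algebra.algebraMap_eq_smul_one, smul_mul_assoc, one_mul,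
      Matrix.mul_smul]
    refine Differentiable.fun_const_smul (f := fun Y : m → Fin p → ℝ =>
      of.symm (of Y * ((of Y)ᵀ * of Y) ^ n)) ?_ a
    induction n with
    | zero => simp
    | succ n ih =>
      simp only [pow_succ, ← Matrix.mul_assoc _ (_ ^ n)]
      exact differentiable_matrix_mul (M := fun Y => of.symm (of Y * ((of Y)ᵀ * of Y) ^ n)) ih hgram

theorem differentiableAt_svdComponent (hp : p ≤ Fintype.card m) {k : Fin p} {Y : m → Fin p → ℝ}
    (hY : Y ∈ simpleLocus m k) : DifferentiableAt ℝ (svdComponent k) Y := by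
  let q := flatComponentPoly (singularValue (of Y)) k
  let e : (m → Fin p → ℝ) → Fin p → ℝ := fun Y' j =>
    singularValue (of Y') j * q.eval (singularValue (of Y') j ^ 2) - (Pi.single k 1 : Fin p → ℝ) j
  obtain ⟨C, hC⟩ := exists_lipschitzWith_singularValue (m := m) hp
  have he (j : Fin p) : (fun Y' => e Y' j) =o[𝓝 Y] fun Y' => Y' - Y :=
    ((isLittleO_eval_flatComponentPoly (singularValue_nonneg _) hY.1 hY.2 j).comp_tendsto
      (hC j).continuous.continuousAt).trans_isBigO <|
        Asymptotics.IsBigO.of_bound C <| Filter.Eventually.of_forall fun Y' => by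
          simpa [dist_eq_norm] using (hC j).dist_le_mul Y' Y
  have hdiff : (fun Y' => of.symm (of Y' * aeval ((of Y')ᵀ * of Y') q) -
      svdComponent k Y') =o[𝓝 Y] fun Y' => Y' - Y := by
    refine Asymptotics.IsBigO.trans_isLittleO (.of_bound 1 ?_)
      (Asymptotics.IsLittleO.sum (s := Finset.univ) fun j _ => (he j).norm_left)
    filter_upwards [(isOpen_simpleLocus hp k).mem_nhds hY] with Y' hY'
    obtain ⟨U, V, h⟩ := exists_isSVD hp (of Y')
    have hsub : of.symm (of Y' * aeval ((of Y')ᵀ * of Y') q) - svdComponent k Y' =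
        of.symm (U * diagonal (e Y') * Vᵀ) := by
      refine (congrArg₂ (fun A A' => of.symm (A - A')) (h.mul_aeval q)
        (h.svdComponent_eq hY')).trans ?_
      rw [← Matrix.sub_mul, ← Matrix.mul_sub, diagonal_sub]
    rw [hsub, one_mul]
    refine (h.norm_mul_diagonal_mul_le (e Y')).trans ?_
    simpa using le_abs_self (∑ j, |e Y' j|)
  have hzero : of.symm (of Y * aeval ((of Y)ᵀ * of Y) q) - svdComponent k Y = 0 := by
    simpa using (hdiff.isBigO.bound.choose_spec).self_of_nhds
  have hfd : HasFDerivAt (fun Y' => of.symm (of Y' * aeval ((of Y')ᵀ * of Y') q) -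
      svdComponent k Y') (0 : (m → Fin p → ℝ) →L[ℝ] m → Fin p → ℝ) Y :=
    .of_isLittleO (by simpa [hzero] using hdiff)
  simpa using (differentiable_mul_aeval q Y).sub hfd.differentiableAt

end Component

section Determinant

theorem det_sq_of_apply_eq_add_involution {ι R : Type*} [Fintype ι] [CommRing R]
    (T : (ι → R) →ₗ[R] ι → R) {a b ε : ι → R} {τ : ι → ι} (hτ : Function.Involutive τ)
    (hT : ∀ h i, T h i = a i * h i + b i * h (τ i)) (ha : ∀ i, a (τ i) = a i)
    (hb : ∀ i, b (τ i) = b i) (hε : ∀ i, ε i * ε i = 1) (hετ : ∀ i, b i * ε (τ i) = -(b i * ε i)) :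
    LinearMap.det T ^ 2 = ∏ i, (a i ^ 2 - b i ^ 2) := by
  classical
  have hE : (diagonal ε).toLin' ∘ₗ (diagonal ε).toLin' = LinearMap.id := by
    rw [← toLin'_mul, diagonal_mul_diagonal]
    simp [hε]
  -- Conjugation by the signs `ε` turns `a + b τ` into `a - b τ`.
  have hcomp : T ∘ₗ ((diagonal ε).toLin' ∘ₗ T ∘ₗ (diagonal ε).toLin') =
      (diagonal fun i => a i ^ 2 - b i ^ 2).toLin' := by
    refine LinearMap.ext fun h => funext fun i => ?_
    simp only [LinearMap.comp_apply, hT, toLin'_apply, mulVec_diagonal, ha, hb, hτ i]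
    linear_combination (a i ^ 2 * h i - a i * b i * h (τ i) - b i ^ 2 * h i) * hε i +
      a i * b i * h (τ i) * hε (τ i) + (a i * h (τ i) + b i * h i) * ε i * hετ i
  calc LinearMap.det T ^ 2
    _ = LinearMap.det T * (LinearMap.det ((diagonal ε).toLin' ∘ₗ (diagonal ε).toLin') *
          LinearMap.det T) := by rw [hE, LinearMap.det_id, one_mul, sq]
    _ = LinearMap.det (T ∘ₗ ((diagonal ε).toLin' ∘ₗ T ∘ₗ (diagonal ε).toLin')) := by
        simp only [LinearMap.det_comp]; ring
    _ = ∏ i, (a i ^ 2 - b i ^ 2) := by rw [hcomp, LinearMap.det_toLin', det_diagonal]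

section Frame

variable {m : Type*} [Fintype m] {p : ℕ}

theorem IsSVD.exists_orthogonal_frame [DecidableEq m] {Y U : Matrix m (Fin p) ℝ} {d : Fin p → ℝ}
    {V : Matrix (Fin p) (Fin p) ℝ} (h : IsSVD Y U d V) :
    ∃ Q : Matrix m (Fin p ⊕ Fin (Fintype.card m - p)) ℝ, Qᵀ * Q = 1 ∧ Q * Qᵀ = 1 ∧
      Q.toCols₁ = U := by
  have hcard : Fintype.card m = Fintype.card (Fin p ⊕ Fin (Fintype.card m - p)) := by
    simp [h.card_le]
  obtain ⟨Q, hQ, hQ', hQU⟩ := exists_orthogonal_extension hcard (fromCols U 0) (Set.range Sum.inl)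
    (by
      rintro _ ⟨i, rfl⟩ _ ⟨j, rfl⟩
      simpa [Matrix.mul_apply, Matrix.one_apply] using congrFun₂ h.left_orthonormal i j)
  exact ⟨Q, hQ, hQ', by ext i j; simpa using hQU i (.inl j) ⟨j, rfl⟩⟩

theorem hasDerivAt_matrix_mul {l n o : Type*} [Finite l] [Fintype n] [Finite o]
    {M : ℝ → l → n → ℝ} {N : ℝ → n → o → ℝ} {M' : l → n → ℝ} {N' : n → o → ℝ} {t : ℝ}
    (hM : HasDerivAt M M' t) (hN : HasDerivAt N N' t) :
    HasDerivAt (fun t => of.symm (of (M t) * of (N t)))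
      (of.symm (of M' * of (N t) + of (M t) * of N')) t := by
  have := Fintype.ofFinite l
  have := Fintype.ofFinite o
  refine hasDerivAt_pi.2 fun i => hasDerivAt_pi.2 fun j => ?_
  simp only [of_symm_apply, Matrix.mul_apply, of_apply, Matrix.add_apply,
    ← Finset.sum_add_distrib]
  exact HasDerivAt.fun_sum fun a _ =>
    (hasDerivAt_pi.1 (hasDerivAt_pi.1 hM i) a).mul (hasDerivAt_pi.1 (hasDerivAt_pi.1 hN a) j)

theorem hasDerivAt_transpose {l n : Type*} [Finite l] [Finite n] {M : ℝ → l → n → ℝ}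
    {M' : l → n → ℝ} {t : ℝ} (hM : HasDerivAt M M' t) :
    HasDerivAt (fun t => of.symm (of (M t))ᵀ) (of.symm (of M')ᵀ) t := by
  have := Fintype.ofFinite l
  have := Fintype.ofFinite n
  exact hasDerivAt_pi.2 fun j => hasDerivAt_pi.2 fun i => hasDerivAt_pi.1 (hasDerivAt_pi.1 hM i) j

end Frame

section FDeriv

theorem hasDerivAt_add_smul {E : Type*} [NormedAddCommGroup E] [NormedSpace ℝ E] (Y H : E) :
    HasDerivAt (fun t : ℝ => Y + t • H) H 0 := by
  simpa using ((hasDerivAt_id (0 : ℝ)).smul_const H).const_add Y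

theorem conj_mul_transpose_conj {m l : Type*} [Fintype l] {p : ℕ} {V : Matrix (Fin p) (Fin p) ℝ}
    (hV : Vᵀ * V = 1) (Q : Matrix m l ℝ) (M N : Matrix l (Fin p) ℝ) :
    (Q * M * Vᵀ) * (Q * N * Vᵀ)ᵀ = Q * (M * Nᵀ) * Qᵀ := by
  simp only [transpose_mul, transpose_transpose, Matrix.mul_assoc]
  rw [← Matrix.mul_assoc Vᵀ, hV, Matrix.one_mul]

variable {m : Type*} [Fintype m] {p : ℕ} {k : Fin p} {Y : m → Fin p → ℝ}

theorem transpose_conj_mul_conj {l : Type*} [Fintype l] [DecidableEq l] {Q : Matrix m l ℝ}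
    (hQ : Qᵀ * Q = 1) (V : Matrix (Fin p) (Fin p) ℝ) (M N : Matrix l (Fin p) ℝ) :
    (Q * M * Vᵀ)ᵀ * (Q * N * Vᵀ) = V * (Mᵀ * N) * Vᵀ := by
  simp only [transpose_mul, transpose_transpose, Matrix.mul_assoc]
  rw [← Matrix.mul_assoc Qᵀ, hQ, Matrix.one_mul]

theorem svdComponent_mul_transpose_comm (hp : p ≤ Fintype.card m) (hY : Y ∈ simpleLocus m k) :
    of (svdComponent k Y) * (of Y)ᵀ = of Y * (of (svdComponent k Y))ᵀ := by
  obtain ⟨U, V, h⟩ := exists_isSVD hp (of Y)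
  rw [h.svdComponent_eq hY, h.eq_mul, conj_mul_transpose_conj h.right_orthonormal,
    conj_mul_transpose_conj h.right_orthonormal]
  simp [diagonal_mul_diagonal, mul_comm]

theorem transpose_svdComponent_mul_comm (hp : p ≤ Fintype.card m) (hY : Y ∈ simpleLocus m k) :
    (of (svdComponent k Y))ᵀ * of Y = (of Y)ᵀ * of (svdComponent k Y) := by
  obtain ⟨U, V, h⟩ := exists_isSVD hp (of Y)
  rw [h.svdComponent_eq hY, h.eq_mul, transpose_conj_mul_conj h.left_orthonormal,
    transpose_conj_mul_conj h.left_orthonormal]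
  simp [diagonal_mul_diagonal, mul_comm]

theorem svdComponent_mul_transpose_mul_self (hp : p ≤ Fintype.card m)
    (hY : Y ∈ simpleLocus m k) :
    of (svdComponent k Y) * (of (svdComponent k Y))ᵀ * of (svdComponent k Y) =
      of (svdComponent k Y) := by
  obtain ⟨U, V, h⟩ := exists_isSVD hp (of Y)
  rw [h.svdComponent_eq hY, conj_mul_transpose_conj h.right_orthonormal]
  simp only [Matrix.mul_assoc]
  rw [← Matrix.mul_assoc Uᵀ, h.left_orthonormal, Matrix.one_mul, ← Matrix.mul_assoc _ᵀ,
    diagonal_transpose, diagonal_mul_diagonal, ← Matrix.mul_assoc (diagonal _),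
    diagonal_mul_diagonal]
  congr with j
  by_cases hj : j = k <;> simp [hj]

theorem hasDerivAt_svdComponent_add_smul (hp : p ≤ Fintype.card m) (hY : Y ∈ simpleLocus m k)
    (H : m → Fin p → ℝ) : HasDerivAt (fun t : ℝ => svdComponent k (Y + t • H))
      (fderiv ℝ (svdComponent k) Y H) 0 := by
  have hA : HasFDerivAt (svdComponent k) (fderiv ℝ (svdComponent k) Y) (Y + (0 : ℝ) • H) := by
    simpa using (differentiableAt_svdComponent hp hY).hasFDerivAt
  exact hA.comp_hasDerivAt 0 (hasDerivAt_add_smul Y H)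

theorem eventually_add_smul_mem_simpleLocus (hp : p ≤ Fintype.card m)
    (hY : Y ∈ simpleLocus m k) (H : m → Fin p → ℝ) :
    ∀ᶠ t : ℝ in 𝓝 0, Y + t • H ∈ simpleLocus m k :=
  (hasDerivAt_add_smul Y H).continuousAt.eventually_mem <| by
    simpa using (isOpen_simpleLocus hp k).mem_nhds hY

theorem fderiv_svdComponent_mul_transpose (hp : p ≤ Fintype.card m) (hY : Y ∈ simpleLocus m k)
    (H : m → Fin p → ℝ) :
    of (fderiv ℝ (svdComponent k) Y H) * (of Y)ᵀ + of (svdComponent k Y) * (of H)ᵀ =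
      of H * (of (svdComponent k Y))ᵀ + of Y * (of (fderiv ℝ (svdComponent k) Y H))ᵀ := by
  have hA := hasDerivAt_svdComponent_add_smul hp hY H
  have hH := hasDerivAt_add_smul Y H
  have hunique := (hasDerivAt_matrix_mul hA (hasDerivAt_transpose hH)).unique <|
    (hasDerivAt_matrix_mul hH (hasDerivAt_transpose hA)).congr_of_eventuallyEq <| by
      filter_upwards [eventually_add_smul_mem_simpleLocus hp hY H] with t ht
      exact congrArg of.symm (svdComponent_mul_transpose_comm hp ht)
  simpa using hunique

theorem transpose_fderiv_svdComponent_mul (hp : p ≤ Fintype.card m) (hY : Y ∈ simpleLocus m k)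
    (H : m → Fin p → ℝ) :
    (of (fderiv ℝ (svdComponent k) Y H))ᵀ * of Y + (of (svdComponent k Y))ᵀ * of H =
      (of H)ᵀ * of (svdComponent k Y) + (of Y)ᵀ * of (fderiv ℝ (svdComponent k) Y H) := by
  have hA := hasDerivAt_svdComponent_add_smul hp hY H
  have hH := hasDerivAt_add_smul Y H
  have hunique := (hasDerivAt_matrix_mul (hasDerivAt_transpose hA) hH).unique <|
    (hasDerivAt_matrix_mul (hasDerivAt_transpose hH) hA).congr_of_eventuallyEq <| by
      filter_upwards [eventually_add_smul_mem_simpleLocus hp hY H] with t ht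
      exact congrArg of.symm (transpose_svdComponent_mul_comm hp ht)
  simpa using hunique

theorem fderiv_svdComponent_mul_transpose_mul (hp : p ≤ Fintype.card m)
    (hY : Y ∈ simpleLocus m k) (H : m → Fin p → ℝ) :
    (of (fderiv ℝ (svdComponent k) Y H) * (of (svdComponent k Y))ᵀ +
      of (svdComponent k Y) * (of (fderiv ℝ (svdComponent k) Y H))ᵀ) * of (svdComponent k Y) +
      of (svdComponent k Y) * (of (svdComponent k Y))ᵀ * of (fderiv ℝ (svdComponent k) Y H) =
    of (fderiv ℝ (svdComponent k) Y H) := by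
  have hA := hasDerivAt_svdComponent_add_smul hp hY H
  have hunique := (hasDerivAt_matrix_mul
    (hasDerivAt_matrix_mul hA (hasDerivAt_transpose hA)) hA).unique <|
    hA.congr_of_eventuallyEq <| by
      filter_upwards [eventually_add_smul_mem_simpleLocus hp hY H] with t ht
      exact congrArg of.symm (svdComponent_mul_transpose_mul_self hp ht)
  simpa using congrArg of hunique

end FDeriv

end Determinant

section Jacobian

/-- Transposition of the square block in the coordinates `QᵀHV` of a matrix `H`, where the columns
of `Q` extend the left singular vectors to an orthonormal basis and those of `V` are the right
singular vectors. -/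
def frameSwap {p : ℕ} {ι : Type*} : (Fin p ⊕ ι) × Fin p → (Fin p ⊕ ι) × Fin p
  | (.inl i, j) => (.inl j, i)
  | (.inr x, j) => (.inr x, j)

/-- Coefficient of `H x` in the `x`-coordinate of the derivative of `svdComponent k` along `H`,
in the coordinates `QᵀHV`. At `(k, k)` the division by zero gives the correct value `0`. -/
noncomputable def derivDiag {p : ℕ} {ι : Type*} (d : Fin p → ℝ) (k : Fin p) :
    (Fin p ⊕ ι) × Fin p → ℝ
  | (.inl i, j) =>
    if i = k then d k / (d k ^ 2 - d j ^ 2) else if j = k then d k / (d k ^ 2 - d i ^ 2) else 0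
  | (.inr _, j) => if j = k then (d k)⁻¹ else 0

/-- Coefficient of `H (frameSwap x)` in the `x`-coordinate of the derivative of `svdComponent k`
along `H`, in the coordinates `QᵀHV`. At `(k, k)` the division by zero gives the correct
value `0`. -/
noncomputable def derivCross {p : ℕ} {ι : Type*} (d : Fin p → ℝ) (k : Fin p) :
    (Fin p ⊕ ι) × Fin p → ℝ
  | (.inl i, j) =>
    if i = k then d j / (d k ^ 2 - d j ^ 2) else if j = k then d i / (d k ^ 2 - d i ^ 2) else 0
  | (.inr _, _) => 0

section Swap

variable {p : ℕ} {ι : Type*}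

theorem frameSwap_involutive : Function.Involutive (frameSwap (p := p) (ι := ι)) := by
  rintro ⟨i | i, j⟩ <;> rfl

theorem derivDiag_frameSwap (d : Fin p → ℝ) (k : Fin p) (x : (Fin p ⊕ ι) × Fin p) :
    derivDiag d k (frameSwap x) = derivDiag d k x := by
  obtain ⟨i | i, j⟩ := x
  · by_cases hi : i = k <;> by_cases hj : j = k <;> simp [frameSwap, derivDiag, hi, hj]
  · rfl

theorem derivCross_frameSwap (d : Fin p → ℝ) (k : Fin p) (x : (Fin p ⊕ ι) × Fin p) :
    derivCross d k (frameSwap x) = derivCross d k x := by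
  obtain ⟨i | i, j⟩ := x
  · by_cases hi : i = k <;> by_cases hj : j = k <;> simp [frameSwap, derivCross, hi, hj]
  · rfl

theorem derivCross_mul_ite_frameSwap (d : Fin p → ℝ) (k : Fin p) (x : (Fin p ⊕ ι) × Fin p) :
    derivCross d k x * (if (frameSwap x).1.getLeft? = some k then 1 else -1) =
      -(derivCross d k x * if x.1.getLeft? = some k then 1 else -1) := by
  obtain ⟨i | i, j⟩ := x
  · by_cases hi : i = k <;> by_cases hj : j = k <;> simp [frameSwap, derivCross, hi, hj]
  · simp [derivCross]

end Swap

theorem eq_derivDiag_mul_add_derivCross_mul {p : ℕ} {ι : Type*} [Fintype ι] {d : Fin p → ℝ}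
    {k : Fin p} (hk : d k ≠ 0) (hd : ∀ j ≠ k, d k ^ 2 - d j ^ 2 ≠ 0)
    {N H D E : Matrix (Fin p ⊕ ι) (Fin p) ℝ} (hD : D = fromRows (diagonal d) 0)
    (hE : E = fromRows (diagonal (Pi.single k 1)) 0)
    (hleft : N * Dᵀ + E * Hᵀ = H * Eᵀ + D * Nᵀ) (hright : Nᵀ * D + Eᵀ * H = Hᵀ * E + Dᵀ * N)
    (hcube : (N * Eᵀ + E * Nᵀ) * E + E * Eᵀ * N = N) (x : (Fin p ⊕ ι) × Fin p) :
    N x.1 x.2 = derivDiag d k x * H x.1 x.2 +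
      derivCross d k x * H (frameSwap x).1 (frameSwap x).2 := by
  subst hD hE
  have hcorner : ∀ i, i ≠ k → ∀ j, j ≠ k → N (.inl i) j = 0 := fun i hi j hj => by
    simpa [Matrix.mul_apply, diagonal_apply, Pi.single_apply, hi, hj] using
      (congrFun₂ hcube (.inl i) j).symm
  have hcenter : N (.inl k) k = 0 := by
    simpa [Matrix.mul_apply, diagonal_apply, Pi.single_apply] using congrFun₂ hcube (.inl k) k
  have hbottom : ∀ x, ∀ j, j ≠ k → N (.inr x) j = 0 := fun x j hj => by
    simpa [Matrix.mul_apply, diagonal_apply, Pi.single_apply, hj] using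
      (congrFun₂ hcube (.inr x) j).symm
  have hcol : ∀ x, N (.inr x) k * d k = H (.inr x) k := fun x => by
    simpa [Matrix.mul_apply, diagonal_apply, Pi.single_apply] using
      congrFun₂ hleft (.inr x) (.inl k)
  have hleft' : ∀ i, i ≠ k → N (.inl i) k * d k = H (.inl i) k + d i * N (.inl k) i :=
    fun i hi => by
      simpa [Matrix.mul_apply, diagonal_apply, Pi.single_apply, hi] using
        congrFun₂ hleft (.inl i) (.inl k)
  have hright' : ∀ i, i ≠ k → N (.inl k) i * d k = H (.inl k) i + d i * N (.inl i) k :=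
    fun i hi => by
      simpa [Matrix.mul_apply, diagonal_apply, Pi.single_apply, hi, mul_comm, add_comm] using
        (congrFun₂ hright k i).symm
  obtain ⟨i | i, j⟩ := x
  · by_cases hi : i = k <;> by_cases hj : j = k
    · simp [derivDiag, derivCross, hi, hj, hcenter]
    · have := hd j hj
      simp only [derivDiag, derivCross, frameSwap, hi, if_true]
      field_simp
      linear_combination d k * hright' j hj + d j * hleft' j hj
    · have := hd i hi
      simp only [derivDiag, derivCross, frameSwap, hi, hj, if_true, if_false]
      field_simp
      linear_combination d k * hleft' i hi + d i * hright' i hi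
    · simp [derivDiag, derivCross, hi, hj, hcorner i hi j hj]
  · by_cases hj : j = k
    · simp [derivDiag, derivCross, hj, ← hcol, mul_comm, hk]
    · simp [derivDiag, derivCross, hj, hbottom i j hj]

theorem prod_one_add_mul_derivDiag_sq_sub {p : ℕ} {ι : Type*} [Fintype ι] {d : Fin p → ℝ}
    {k : Fin p} (hk : d k ≠ 0) (hd : ∀ j ≠ k, d k ^ 2 - d j ^ 2 ≠ 0) (s : ℝ) :
    ∏ x : (Fin p ⊕ ι) × Fin p, ((1 + s * derivDiag d k x) ^ 2 - (s * derivCross d k x) ^ 2) =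
      (((d k + s) / d k) ^ Fintype.card ι *
        ∏ j ∈ Finset.univ.erase k, ((d k + s) ^ 2 - d j ^ 2) / (d k ^ 2 - d j ^ 2)) ^ 2 := by
  let F : Fin p → ℝ := fun j =>
    if j = k then 1 else ((d k + s) ^ 2 - d j ^ 2) / (d k ^ 2 - d j ^ 2)
  have hF : ∏ j ∈ Finset.univ.erase k, ((d k + s) ^ 2 - d j ^ 2) / (d k ^ 2 - d j ^ 2) =
      ∏ j, F j := by
    rw [← Finset.mul_prod_erase _ F (Finset.mem_univ k), show F k = 1 from if_pos rfl, one_mul]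
    exact Finset.prod_congr rfl fun j hj => (if_neg (Finset.ne_of_mem_erase hj)).symm
  have htop : ∀ i j, (1 + s * derivDiag (ι := ι) d k (.inl i, j)) ^ 2 -
      (s * derivCross (ι := ι) d k (.inl i, j)) ^ 2 =
        (if i = k then F j else 1) * if j = k then F i else 1 := fun i j => by
    by_cases hi : i = k <;> by_cases hj : j = k
    · simp [derivDiag, derivCross, F, hi, hj]
    · have := hd j hj
      simp only [derivDiag, derivCross, F, hi, hj, if_true, if_false]
      field_simp
      ring
    · have := hd i hi
      simp only [derivDiag, derivCross, F, hi, hj, if_true, if_false]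
      field_simp
      ring
    · simp [derivDiag, derivCross, hi, hj]
  have hbot : ∀ x j, (1 + s * derivDiag (ι := ι) d k (.inr x, j)) ^ 2 -
      (s * derivCross (ι := ι) d k (.inr x, j)) ^ 2 =
        if j = k then ((d k + s) / d k) ^ 2 else 1 := fun x j => by
    by_cases hj : j = k
    · simp only [derivDiag, derivCross, hj, if_true]
      field_simp
      ring
    · simp [derivDiag, derivCross, hj]
  rw [Fintype.prod_prod_type, Fintype.prod_sum_type, hF]
  simp only [htop, hbot, Finset.prod_mul_distrib, Finset.prod_ite_irrel, Finset.prod_const_one,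
    Finset.prod_ite_eq', Finset.mem_univ, if_true, Finset.prod_const, Finset.card_univ]
  rw [mul_pow, pow_right_comm, sq (∏ j, F j), mul_comm]

section Conj

variable {l n o r : Type*} [Fintype l] [DecidableEq l] [Fintype n] [Fintype o] [DecidableEq o]
  [Fintype r] {Q : Matrix n l ℝ} {R : Matrix r o ℝ}

theorem transpose_conj_conj (hQ : Qᵀ * Q = 1) (hR : Rᵀ * R = 1) (M : Matrix l o ℝ) :
    Qᵀ * (Q * M * Rᵀ) * R = M := by
  rw [Matrix.mul_assoc Q, ← Matrix.mul_assoc Qᵀ, hQ, Matrix.one_mul, Matrix.mul_assoc, hR,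
    Matrix.mul_one]

theorem eq_of_conj_eq (hQ : Qᵀ * Q = 1) (hR : Rᵀ * R = 1) {M N : Matrix l o ℝ}
    (h : Q * M * Rᵀ = Q * N * Rᵀ) : M = N := by
  rw [← transpose_conj_conj hQ hR M, h, transpose_conj_conj hQ hR]

end Conj

theorem conj_transpose_mul_conj {l n o : Type*} [Fintype l] [DecidableEq l] [Fintype n]
    {p : ℕ} {Q : Matrix n l ℝ} (hQ : Qᵀ * Q = 1) (V : Matrix o (Fin p) ℝ) (M : Matrix l l ℝ)
    (N : Matrix l (Fin p) ℝ) : Q * M * Qᵀ * (Q * N * Vᵀ) = Q * (M * N) * Vᵀ := by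
  simp only [Matrix.mul_assoc]
  rw [← Matrix.mul_assoc Qᵀ, hQ, Matrix.one_mul]

section Frame

variable {m : Type*} [Fintype m] {p : ℕ} {ι : Type*} [Fintype ι] {k : Fin p} {Y : m → Fin p → ℝ}

theorem sq_sub_sq_singularValue_ne_zero (hY : Y ∈ simpleLocus m k) :
    ∀ j ≠ k, singularValue (of Y) k ^ 2 - singularValue (of Y) j ^ 2 ≠ 0 := fun j hj => by
  rw [sub_ne_zero, Ne, sq_eq_sq₀ (singularValue_nonneg _ _) (singularValue_nonneg _ _)]
  exact (hY.2 j hj).symm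

theorem IsSVD.fderiv_svdComponent_conj [DecidableEq m] [DecidableEq ι] {U : Matrix m (Fin p) ℝ}
    {V : Matrix (Fin p) (Fin p) ℝ} (h : IsSVD (of Y) U (singularValue (of Y)) V)
    (hY : Y ∈ simpleLocus m k) {Q : Matrix m (Fin p ⊕ ι) ℝ} (hQ : Qᵀ * Q = 1)
    (hQ' : Q * Qᵀ = 1) (hQU : Q.toCols₁ = U)
    (H : Matrix (Fin p ⊕ ι) (Fin p) ℝ) :
    of (fderiv ℝ (svdComponent k) Y (of.symm (Q * H * Vᵀ))) =
      Q * of (fun i j => derivDiag (singularValue (of Y)) k (i, j) * H i j +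
        derivCross (singularValue (of Y)) k (i, j) *
          H (frameSwap (i, j)).1 (frameSwap (i, j)).2) * Vᵀ := by
  have hk := hY.1.ne'
  have hd := sq_sub_sq_singularValue_ne_zero hY
  generalize singularValue (of Y) = d at h hk hd ⊢
  obtain ⟨N, hN⟩ :
      ∃ N : Matrix (Fin p ⊕ ι) (Fin p) ℝ,
        of (fderiv ℝ (svdComponent k) Y (of.symm (Q * H * Vᵀ))) = Q * N * Vᵀ := by
    refine ⟨Qᵀ * of (fderiv ℝ (svdComponent k) Y (of.symm (Q * H * Vᵀ))) * V, ?_⟩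
    simpa using (transpose_conj_conj (Q := Qᵀ) (R := Vᵀ) (by simpa)
      (by simpa using mul_eq_one_comm.1 h.right_orthonormal) _).symm
  have hrect : ∀ e : Fin p → ℝ,
      U * diagonal e * Vᵀ = Q * fromRows (diagonal e) (0 : Matrix ι (Fin p) ℝ) * Vᵀ := fun e => by
    rw [← fromCols_toCols Q, fromCols_mul_fromRows, hQU, Matrix.mul_zero, add_zero]
  have hleft := fderiv_svdComponent_mul_transpose h.card_le hY (of.symm (Q * H * Vᵀ))
  have hright := transpose_fderiv_svdComponent_mul h.card_le hY (of.symm (Q * H * Vᵀ))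
  have hcube := fderiv_svdComponent_mul_transpose_mul h.card_le hY (of.symm (Q * H * Vᵀ))
  simp only [hN, h.svdComponent_eq hY, h.eq_mul, hrect, Equiv.apply_symm_apply,
    conj_mul_transpose_conj h.right_orthonormal, ← Matrix.add_mul, ← Matrix.mul_add,
    transpose_conj_mul_conj hQ, conj_transpose_mul_conj hQ] at hleft hright hcube
  rw [hN]
  congr 2
  have hcoord := eq_derivDiag_mul_add_derivCross_mul hk hd rfl rfl
    (eq_of_conj_eq hQ hQ hleft)
    (eq_of_conj_eq h.right_orthonormal h.right_orthonormal hright)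
    (eq_of_conj_eq hQ h.right_orthonormal hcube)
  ext i j
  exact hcoord (i, j)

/-- The linear change of coordinates `g ↦ QgVᵀ` for `Q` and `V` orthogonal; its inverse reads off
the coordinates `QᵀHV` in which `svdComponent k` has a two-term derivative. -/
def frameEquiv [DecidableEq m] [DecidableEq ι] (Q : Matrix m (Fin p ⊕ ι) ℝ)
    (V : Matrix (Fin p) (Fin p) ℝ) (hQ : Qᵀ * Q = 1) (hQ' : Q * Qᵀ = 1) (hV : Vᵀ * V = 1) :
    ((Fin p ⊕ ι) × Fin p → ℝ) ≃ₗ[ℝ] (m → Fin p → ℝ) where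
  toFun g := of.symm (Q * of (Function.curry g) * Vᵀ)
  map_add' f g := by
    rw [show of (Function.curry (f + g)) = of (Function.curry f) + of (Function.curry g) from rfl,
      Matrix.mul_add, Matrix.add_mul]
    rfl
  map_smul' c g := by
    rw [show of (Function.curry (c • g)) = c • of (Function.curry g) from rfl,
      Matrix.mul_smul, Matrix.smul_mul]
    rfl
  invFun H := Function.uncurry (of.symm (Qᵀ * of H * V))
  left_inv g := by simp [transpose_conj_conj hQ hV]
  right_inv H := by
    simpa using congrArg of.symm (transpose_conj_conj (Q := Qᵀ) (R := Vᵀ) (by simpa)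
      (by simpa using mul_eq_one_comm.1 hV) (of H))

theorem IsSVD.frameEquiv_symm_fderiv_svdComponent [DecidableEq m] [DecidableEq ι]
    {U : Matrix m (Fin p) ℝ} {V : Matrix (Fin p) (Fin p) ℝ}
    (h : IsSVD (of Y) U (singularValue (of Y)) V)
    (hY : Y ∈ simpleLocus m k) {Q : Matrix m (Fin p ⊕ ι) ℝ} (hQ : Qᵀ * Q = 1)
    (hQ' : Q * Qᵀ = 1) (hQU : Q.toCols₁ = U)
    (g : (Fin p ⊕ ι) × Fin p → ℝ) (x : (Fin p ⊕ ι) × Fin p) :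
    (frameEquiv Q V hQ hQ' h.right_orthonormal).symm (fderiv ℝ (svdComponent k) Y
      (frameEquiv Q V hQ hQ' h.right_orthonormal g)) x =
    derivDiag (singularValue (of Y)) k x * g x +
      derivCross (singularValue (of Y)) k x * g (frameSwap x) := by
  change (Qᵀ * of (fderiv ℝ (svdComponent k) Y (of.symm (Q * of (Function.curry g) * Vᵀ))) * V)
    x.1 x.2 = _
  rw [h.fderiv_svdComponent_conj hY hQ hQ' hQU, transpose_conj_conj hQ h.right_orthonormal]
  rfl

theorem abs_det_id_add_smul_fderiv_svdComponent (hp : p ≤ Fintype.card m)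
    (hY : Y ∈ simpleLocus m k) (s : ℝ) :
    |(ContinuousLinearMap.id ℝ (m → Fin p → ℝ) + s • fderiv ℝ (svdComponent k) Y).det| =
      |((singularValue (of Y) k + s) / singularValue (of Y) k) ^ (Fintype.card m - p) *
        ∏ j ∈ Finset.univ.erase k,
          ((singularValue (of Y) k + s) ^ 2 - singularValue (of Y) j ^ 2) /
            (singularValue (of Y) k ^ 2 - singularValue (of Y) j ^ 2)| := by
  classical
  obtain ⟨U, V, h⟩ := exists_isSVD hp (of Y)
  obtain ⟨Q, hQ, hQ', hQU⟩ := h.exists_orthogonal_frame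
  let e := frameEquiv Q V hQ hQ' h.right_orthonormal
  let T := (ContinuousLinearMap.id ℝ (m → Fin p → ℝ) + s • fderiv ℝ (svdComponent k) Y).toLinearMap
  have hT : ∀ g x, (e.symm.toLinearMap ∘ₗ T ∘ₗ e.symm.symm.toLinearMap) g x =
      (1 + s * derivDiag (singularValue (of Y)) k x) * g x +
        s * derivCross (singularValue (of Y)) k x * g (frameSwap x) := fun g x => by
    have hconj : (e.symm.toLinearMap ∘ₗ T ∘ₗ e.symm.symm.toLinearMap) g x =
        g x + s * e.symm (fderiv ℝ (svdComponent k) Y (e g)) x := by simp [T, e]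
    rw [hconj, h.frameEquiv_symm_fderiv_svdComponent hY hQ hQ' hQU]
    ring
  rw [← sq_eq_sq_iff_abs_eq_abs, ContinuousLinearMap.det, ← LinearMap.det_conj T e.symm,
    det_sq_of_apply_eq_add_involution _ frameSwap_involutive hT
      (fun x => by rw [derivDiag_frameSwap]) (fun x => by rw [derivCross_frameSwap])
      (ε := fun x => if x.1.getLeft? = some k then 1 else -1) (fun x => by split_ifs <;> norm_num)
      (fun x => by rw [mul_assoc, derivCross_mul_ite_frameSwap]; ring),
    prod_one_add_mul_derivDiag_sq_sub hY.1.ne' (sq_sub_sq_singularValue_ne_zero hY),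
    Fintype.card_fin]

end Frame

end Jacobian

section Shift

/-- The interval `(d l, d (k - 1))`, where `d (-1) = ∞`: the values a `k`-th singular value may
take above `d l` while the other ones are fixed. -/
def levelInterval {p : ℕ} (d : Fin p → ℝ) (l k : Fin p) : Set ℝ :=
  {z | d l < z ∧ ∀ j < k, z < d j}

theorem levelInterval_add_smul_single {p : ℕ} (d : Fin p → ℝ) {l k : Fin p} (hl : l ≠ k) (s : ℝ) :
    levelInterval (d + s • Pi.single k 1) l k = levelInterval d l k := by
  ext z
  simp +contextual [levelInterval, hl, LT.lt.ne]

theorem antitone_add_smul_single {p : ℕ} {d : Fin p → ℝ} {k k' : Fin p} {s : ℝ} (hk : k ⋖ k')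
    (hd : Antitone d) (hs : d k + s ∈ levelInterval d k' k) :
    Antitone (d + s • Pi.single k 1) := by
  intro i j hij
  obtain rfl | hi := eq_or_ne i k <;> obtain rfl | hj := eq_or_ne j i <;> try rfl
  · have := hd (hk.ge_of_gt (hij.lt_of_ne hj.symm))
    simpa [hj] using this.trans hs.1.le
  · obtain rfl | hj' := eq_or_ne j k
    · simpa [hi] using (hs.2 i (hij.lt_of_ne hi)).le
    · simpa [hi, hj'] using hd hij

variable {m : Type*} [Fintype m] {p : ℕ} {k k' : Fin p} {s : ℝ} {Y : m → Fin p → ℝ}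

/-- Adding `s` to the `k`-th singular value of `Y` while keeping its singular vectors. -/
noncomputable def shiftSingularValue (k : Fin p) (s : ℝ) (Y : m → Fin p → ℝ) : m → Fin p → ℝ :=
  Y + s • svdComponent k Y

/-- The matrices whose `k`-th singular value is simple and, after adding `s` to it, still lies
strictly between its neighbours, the next smaller one having index `k'`. -/
def shiftDomain (m : Type*) [Fintype m] (k k' : Fin p) (s : ℝ) : Set (m → Fin p → ℝ) :=
  {Y | Y ∈ simpleLocus m k ∧
    singularValue (of Y) k + s ∈ levelInterval (singularValue (of Y)) k' k}

theorem singularValue_mem_levelInterval (hk : k < k') (hY : Y ∈ simpleLocus m k) :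
    singularValue (of Y) k ∈ levelInterval (singularValue (of Y)) k' k :=
  ⟨(singularValue_antitone _ hk.le).lt_of_ne (hY.2 k' hk.ne'),
    fun j hj => (singularValue_antitone _ hj.le).lt_of_ne (hY.2 j hj.ne).symm⟩

theorem IsSVD.shiftSingularValue (hk : k ⋖ k') (hY : Y ∈ shiftDomain m k k' s)
    {U : Matrix m (Fin p) ℝ} {V : Matrix (Fin p) (Fin p) ℝ} {d : Fin p → ℝ}
    (h : IsSVD (of Y) U d V) :
    IsSVD (of (shiftSingularValue k s Y)) U (d + s • Pi.single k 1) V where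
  eq_mul := by
    rw [← h.add_smul_eq, ← h.svdComponent_eq hY.1]
    rfl
  left_orthonormal := h.left_orthonormal
  right_orthonormal := h.right_orthonormal
  antitone := by
    rw [h.eq_singularValue]
    exact antitone_add_smul_single hk (singularValue_antitone _) hY.2
  nonneg i := by
    obtain rfl | hi := eq_or_ne i k
    · simpa [h.eq_singularValue] using (singularValue_nonneg (of Y) k').trans hY.2.1.le
    · simpa [hi] using h.nonneg i

theorem singularValue_shiftSingularValue (hp : p ≤ Fintype.card m) (hk : k ⋖ k')
    (hY : Y ∈ shiftDomain m k k' s) :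
    singularValue (of (shiftSingularValue k s Y)) = singularValue (of Y) + s • Pi.single k 1 := by
  obtain ⟨U, V, h⟩ := exists_isSVD hp (of Y)
  exact (h.shiftSingularValue hk hY).eq_singularValue.symm

theorem shiftSingularValue_mem_simpleLocus (hp : p ≤ Fintype.card m) (hk : k ⋖ k')
    (hY : Y ∈ shiftDomain m k k' s) : shiftSingularValue k s Y ∈ simpleLocus m k := by
  rw [simpleLocus, Set.mem_ofPred_eq, singularValue_shiftSingularValue hp hk hY]
  refine ⟨by simpa using (singularValue_nonneg (of Y) k').trans_lt hY.2.1, fun j hj => ?_⟩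
  rcases hj.lt_or_gt with hjk | hkj
  · simpa [hj] using (hY.2.2 j hjk).ne'
  · simpa [hj] using ((singularValue_antitone (of Y) (hk.ge_of_gt hkj)).trans_lt hY.2.1).ne

theorem svdComponent_shiftSingularValue (hp : p ≤ Fintype.card m) (hk : k ⋖ k')
    (hY : Y ∈ shiftDomain m k k' s) :
    svdComponent k (shiftSingularValue k s Y) = svdComponent k Y := by
  obtain ⟨U, V, h⟩ := exists_isSVD hp (of Y)
  exact of.injective <| ((h.shiftSingularValue hk hY).svdComponent_eq
    (shiftSingularValue_mem_simpleLocus hp hk hY)).trans (h.svdComponent_eq hY.1).symm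

theorem shiftSingularValue_mem_shiftDomain (hp : p ≤ Fintype.card m) (hk : k ⋖ k')
    (hY : Y ∈ shiftDomain m k k' s) : shiftSingularValue k s Y ∈ shiftDomain m k k' (-s) := by
  refine ⟨shiftSingularValue_mem_simpleLocus hp hk hY, ?_⟩
  rw [singularValue_shiftSingularValue hp hk hY, levelInterval_add_smul_single _ hk.lt.ne']
  simpa using singularValue_mem_levelInterval hk.lt hY.1

theorem shiftSingularValue_neg_shiftSingularValue (hp : p ≤ Fintype.card m) (hk : k ⋖ k')
    (hY : Y ∈ shiftDomain m k k' s) :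
    shiftSingularValue k (-s) (shiftSingularValue k s Y) = Y := by
  rw [shiftSingularValue, svdComponent_shiftSingularValue hp hk hY, shiftSingularValue]
  simp

theorem bijOn_shiftSingularValue (hp : p ≤ Fintype.card m) (hk : k ⋖ k') (s : ℝ) :
    Set.BijOn (shiftSingularValue k s) (shiftDomain m k k' s) (shiftDomain m k k' (-s)) := by
  refine Set.InvOn.bijOn (f' := shiftSingularValue k (-s)) ⟨fun Y hY => ?_, fun Y hY => ?_⟩
    (fun Y hY => shiftSingularValue_mem_shiftDomain hp hk hY) fun Y hY => ?_
  · exact shiftSingularValue_neg_shiftSingularValue hp hk hY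
  · simpa using shiftSingularValue_neg_shiftSingularValue hp hk hY
  · simpa using shiftSingularValue_mem_shiftDomain hp hk hY

theorem hasFDerivAt_shiftSingularValue (hp : p ≤ Fintype.card m) (hY : Y ∈ simpleLocus m k) :
    HasFDerivAt (shiftSingularValue k s)
      (ContinuousLinearMap.id ℝ (m → Fin p → ℝ) + s • fderiv ℝ (svdComponent k) Y) Y :=
  (hasFDerivAt_id Y).add ((differentiableAt_svdComponent hp hY).hasFDerivAt.const_smul s)

end Shift

section GaussianMatrix

theorem pi_withDensity_ofReal {ι : Type*} [Fintype ι] {α : ι → Type*}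
    [∀ i, MeasurableSpace (α i)] (μ : ∀ i, Measure (α i)) [∀ i, SigmaFinite (μ i)]
    {f : ∀ i, α i → ℝ} (hf₀ : ∀ i, 0 ≤ f i) (hf : ∀ i, Integrable (f i) (μ i)) :
    Measure.pi (fun i => (μ i).withDensity fun x => ENNReal.ofReal (f i x)) =
      (Measure.pi μ).withDensity fun x => ENNReal.ofReal (∏ i, f i (x i)) := by
  have : ∀ i, IsFiniteMeasure ((μ i).withDensity fun x => ENNReal.ofReal (f i x)) :=
    fun i => isFiniteMeasure_withDensity_ofReal (hf i).2
  refine Measure.pi_eq fun s hs => ?_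
  rw [withDensity_apply _ (.univ_pi hs), Measure.restrict_pi_pi,
    ← ofReal_integral_eq_lintegral_ofReal (.fintype_prod_dep fun i => (hf i).restrict)
      (.of_forall fun x => Finset.prod_nonneg fun i _ => hf₀ i (x i)),
    integral_fintype_prod_eq_prod, ENNReal.ofReal_prod_of_nonneg fun i _ => integral_nonneg (hf₀ i)]
  refine Finset.prod_congr rfl fun i _ => ?_
  rw [withDensity_apply _ (hs i),
    ofReal_integral_eq_lintegral_ofReal (hf i).restrict (.of_forall (hf₀ i))]

/-- The density of a Gaussian matrix with mean `B` and independent entries of variance `v`. -/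
noncomputable def gaussianMatrixPDF {m n : Type*} [Fintype m] [Fintype n] (B : Matrix m n ℝ)
    (v : NNReal) (Y : m → n → ℝ) : ℝ :=
  ∏ i, ∏ j, gaussianPDFReal (B i j) v (Y i j)

/-- The law of a Gaussian matrix with mean `B` and independent entries of variance `v`. -/
noncomputable def gaussianMatrix {m n : Type*} [Fintype m] [Fintype n] (B : Matrix m n ℝ)
    (v : NNReal) : Measure (m → n → ℝ) :=
  Measure.pi fun i => Measure.pi fun j => gaussianReal (B i j) v

variable {m n : Type*} [Fintype m] [Fintype n] (B : Matrix m n ℝ) {v : NNReal}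

instance : IsProbabilityMeasure (gaussianMatrix B v) :=
  have : ∀ i, IsProbabilityMeasure (Measure.pi fun j => gaussianReal (B i j) v) :=
    fun _ => inferInstance
  Measure.pi.instIsProbabilityMeasure _

theorem gaussianMatrix_eq_withDensity (hv : v ≠ 0) :
    gaussianMatrix B v = volume.withDensity fun Y => ENNReal.ofReal (gaussianMatrixPDF B v Y) := by
  simp only [gaussianMatrix, gaussianReal_of_var_ne_zero _ hv, gaussianPDF_def]
  have hrow (i) := pi_withDensity_ofReal (fun _ : n => volume)
    (fun j x => gaussianPDFReal_nonneg (B i j) v x) fun j => integrable_gaussianPDFReal (B i j) v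
  simp only [hrow]
  exact pi_withDensity_ofReal (fun _ : m => volume)
    (fun i y => Finset.prod_nonneg fun j _ => gaussianPDFReal_nonneg (B i j) v (y j))
    fun i => .fintype_prod_dep fun j => integrable_gaussianPDFReal (B i j) v

theorem gaussianMatrixPDF_nonneg (v : NNReal) (Y : m → n → ℝ) : 0 ≤ gaussianMatrixPDF B v Y :=
  Finset.prod_nonneg fun i _ => Finset.prod_nonneg fun j _ =>
    gaussianPDFReal_nonneg (B i j) v (Y i j)

theorem continuous_gaussianMatrixPDF : Continuous (gaussianMatrixPDF B v) := by
  unfold gaussianMatrixPDF gaussianPDFReal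
  fun_prop

theorem exp_mul_gaussianMatrixPDF {Y Y' : m → n → ℝ} {a b : ℝ}
    (h : ∑ i, ∑ j, (Y i j - B i j) ^ 2 + a = ∑ i, ∑ j, (Y' i j - B i j) ^ 2 + b) :
    Real.exp (-a / (2 * v)) * gaussianMatrixPDF B v Y =
      Real.exp (-b / (2 * v)) * gaussianMatrixPDF B v Y' := by
  have hpdf (X : m → n → ℝ) : gaussianMatrixPDF B v X =
      (∏ _i : m, ∏ _j : n, (√(2 * Real.pi * v))⁻¹) *
        Real.exp (-(∑ i, ∑ j, (X i j - B i j) ^ 2) / (2 * v)) := by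
    simp only [gaussianMatrixPDF, gaussianPDFReal, Finset.prod_mul_distrib, ← Real.exp_sum,
      ← Finset.sum_neg_distrib, Finset.sum_div]
  rw [hpdf, hpdf, mul_left_comm, mul_left_comm (Real.exp (-b / (2 * v))), ← Real.exp_add,
    ← Real.exp_add]
  congr 2
  rw [← add_div, ← add_div]
  congr 1
  linarith

end GaussianMatrix

section IntegralTransform

variable (μ : Measure ℝ) [IsProbabilityMeasure μ] [NullSingletonClass μ]

theorem continuous_cdf_of_nullSingletonClass : Continuous (cdf μ) := by
  refine continuous_iff_continuousAt.2 fun x => ?_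
  rw [(monotone_cdf μ).continuousAt_iff_leftLim_eq_rightLim, (cdf μ).rightLim_eq]
  refine ((monotone_cdf μ).leftLim_le le_rfl).antisymm (sub_nonpos.1 ?_)
  rw [← ENNReal.ofReal_eq_zero, ← StieltjesFunction.measure_singleton, measure_cdf,
    measure_singleton]

theorem isCompact_preimage_cdf_singleton {u : ℝ} (h₀ : 0 < u) (h₁ : u < 1) :
    IsCompact (cdf μ ⁻¹' {u}) := by
  obtain ⟨x, hx⟩ := ((tendsto_cdf_atBot μ).eventually_lt_const h₀).exists
  obtain ⟨y, hy⟩ := ((tendsto_cdf_atTop μ).eventually_const_lt h₁).exists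
  refine isCompact_Icc.of_isClosed_subset (s := Set.Icc x y)
    (isClosed_singleton.preimage (continuous_cdf_of_nullSingletonClass μ)) ?_
  rintro z rfl
  exact ⟨(monotone_cdf μ).reflect_lt hx |>.le, (monotone_cdf μ).reflect_lt hy |>.le⟩

theorem nonempty_preimage_cdf_singleton {u : ℝ} (h₀ : 0 < u) (h₁ : u < 1) :
    (cdf μ ⁻¹' {u}).Nonempty :=
  mem_range_of_exists_le_of_exists_ge (continuous_cdf_of_nullSingletonClass μ)
    ((tendsto_cdf_atBot μ).eventually_le_const h₀).exists
    ((tendsto_cdf_atTop μ).eventually_const_le h₁).exists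

theorem measure_preimage_cdf_Ioo {a b : ℝ} (ha : 0 < a) (hab : a < b) (hb : b < 1) :
    μ (cdf μ ⁻¹' Set.Ioo a b) = ENNReal.ofReal (b - a) := by
  obtain ⟨x, rfl, hx⟩ := (isCompact_preimage_cdf_singleton μ ha (hab.trans hb)).exists_isGreatest
    (nonempty_preimage_cdf_singleton μ ha (hab.trans hb))
  obtain ⟨y, rfl, hy⟩ := (isCompact_preimage_cdf_singleton μ (ha.trans hab) hb).exists_isLeast
    (nonempty_preimage_cdf_singleton μ (ha.trans hab) hb)
  have hIoo : cdf μ ⁻¹' Set.Ioo (cdf μ x) (cdf μ y) = Set.Ioo x y := by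
    ext z
    refine ⟨fun hz => ⟨(monotone_cdf μ).reflect_lt hz.1, (monotone_cdf μ).reflect_lt hz.2⟩,
      fun hz => ⟨?_, ?_⟩⟩
    · exact ((monotone_cdf μ) hz.1.le).lt_of_ne fun h => hz.1.not_ge (hx h.symm)
    · exact ((monotone_cdf μ) hz.2.le).lt_of_ne fun h => hz.2.not_ge (hy h)
  rw [hIoo, measure_congr Ioo_ae_eq_Ioc, ← (cdf μ).measure_Ioc, measure_cdf]

theorem measure_lt_min_real_Ioi {α : ℝ} (h₀ : 0 < α) (h₁ : α < 1) :
    μ {z | α / 2 < min (μ.real (Set.Ioi z)) (1 - μ.real (Set.Ioi z))} =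
      ENNReal.ofReal (1 - α) := by
  have hIoi (z) : μ.real (Set.Ioi z) = 1 - cdf μ z := by
    rw [cdf_eq_real, ← Set.compl_Iic, probReal_compl_eq_one_sub measurableSet_Iic]
  convert! measure_preimage_cdf_Ioo μ (a := α / 2) (b := 1 - α / 2) (by linarith) (by linarith)
    (by linarith) using 2
  · ext z
    simp only [hIoi, Set.mem_ofPred_eq, lt_min_iff, Set.mem_preimage, Set.mem_Ioo]
    constructor <;> rintro ⟨h, h'⟩ <;> constructor <;> linarith
  · ring

end IntegralTransform

section SingularValueLaw

variable {p : ℕ} {k k' : Fin p} {v : NNReal}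

/-- The density, up to a constant factor, of the `k`-th singular value of a Gaussian matrix with
entries of variance `v` given the other ones `d` and all singular vectors, where `δ` is the
`k`-th singular component of the mean and `n` the number of rows minus the number of columns. -/
noncomputable def singularValueWeight (v : NNReal) (n : ℕ) (δ : ℝ) (d : Fin p → ℝ) (k : Fin p)
    (z : ℝ) : ℝ :=
  Real.exp (-(z - δ) ^ 2 / (2 * v)) * z ^ n * ∏ j ∈ Finset.univ.erase k, |z ^ 2 - d j ^ 2|

theorem singularValueWeight_add_smul_single (v : NNReal) (n : ℕ) (δ : ℝ) (d : Fin p → ℝ)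
    (k : Fin p) (s : ℝ) :
    singularValueWeight v n δ (d + s • Pi.single k 1) k = singularValueWeight v n δ d k := by
  ext z
  unfold singularValueWeight
  congr 1
  refine Finset.prod_congr rfl fun j hj => ?_
  simp [Finset.ne_of_mem_erase hj]

theorem continuous_singularValueWeight (v : NNReal) (n : ℕ) (δ : ℝ) (d : Fin p → ℝ) (k : Fin p) :
    Continuous (singularValueWeight v n δ d k) := by
  unfold singularValueWeight
  fun_prop

theorem singularValueWeight_pos {d : Fin p → ℝ} (hk : k ⋖ k') (hd : Antitone d)
    (h₀ : ∀ i, 0 ≤ d i) {z : ℝ} (hz : z ∈ levelInterval d k' k) (n : ℕ) (δ : ℝ) :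
    0 < singularValueWeight v n δ d k z := by
  have hz₀ : 0 < z := (h₀ k').trans_lt hz.1
  refine mul_pos (by positivity) (Finset.prod_pos fun j hj => abs_pos.2 (sub_ne_zero.2 ?_))
  rw [Ne, sq_eq_sq₀ hz₀.le (h₀ j)]
  rcases (Finset.ne_of_mem_erase hj).lt_or_gt with hjk | hkj
  · exact (hz.2 j hjk).ne
  · exact ((hd (hk.ge_of_gt hkj)).trans_lt hz.1).ne'

theorem integrable_exp_neg_sq_mul_eval (hv : v ≠ 0) (δ : ℝ) (q : ℝ[X]) :
    Integrable fun z : ℝ => Real.exp (-(z - δ) ^ 2 / (2 * v)) * q.eval z := by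
  have hq : Integrable (fun z => q.eval z) (gaussianReal δ v) := by
    simp only [eval_eq_sum_range]
    exact integrable_finsetSum _ fun i _ =>
      (((memLp_id_gaussianReal (μ := δ) (v := v) i).integrable_norm_pow'.mono'
        (by fun_prop) (.of_forall fun z => by simp)).const_mul _)
  rw [gaussianReal_of_var_ne_zero _ hv, integrable_withDensity_iff_integrable_smul'
    (measurable_gaussianPDF δ v) (.of_forall fun _ => gaussianPDF_lt_top)] at hq
  refine (hq.const_mul √(2 * Real.pi * v)).congr (.of_forall fun z => ?_)
  have : √(2 * Real.pi * v) ≠ 0 := by positivity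
  simp only [toReal_gaussianPDF, gaussianPDFReal, smul_eq_mul]
  field_simp

theorem integrable_singularValueWeight (hv : v ≠ 0) (n : ℕ) (δ : ℝ) (d : Fin p → ℝ) (k : Fin p) :
    Integrable (singularValueWeight v n δ d k) := by
  refine (integrable_exp_neg_sq_mul_eval hv δ
    (X ^ n * ∏ j ∈ Finset.univ.erase k, (X ^ 2 - C (d j ^ 2)))).mono
    (continuous_singularValueWeight v n δ d k).aestronglyMeasurable (.of_forall fun z => ?_)
  simp [singularValueWeight, eval_prod, mul_assoc]

theorem isOpen_levelInterval (d : Fin p → ℝ) (l k : Fin p) : IsOpen (levelInterval d l k) := by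
  have : levelInterval d l k = Set.Ioi (d l) ∩ ⋂ j : Set.Iio k, Set.Iio (d j) := by
    ext z
    simp [levelInterval]
  exact this ▸ isOpen_Ioi.inter (isOpen_iInter_of_finite fun _ => isOpen_Iio)

/-- The conditional law of the `k`-th singular value of a Gaussian matrix given the other ones and
all singular vectors; the next smaller singular value has index `k'`. -/
noncomputable def singularValueLaw (v : NNReal) (n : ℕ) (δ : ℝ) (d : Fin p → ℝ) (k k' : Fin p) :
    Measure ℝ :=
  (volume.withDensity fun z => ENNReal.ofReal (singularValueWeight v n δ d k z))[|
    levelInterval d k' k]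

instance (n : ℕ) (δ : ℝ) (d : Fin p → ℝ) :
    NullSingletonClass (singularValueLaw v n δ d k k') where
  measure_singleton x :=
    cond_absolutelyContinuous (withDensity_absolutelyContinuous volume _ (measure_singleton x))

theorem withDensity_singularValueWeight_levelInterval (hv : v ≠ 0) {d : Fin p → ℝ} (hk : k ⋖ k')
    (hd : Antitone d) (h₀ : ∀ i, 0 ≤ d i) (n : ℕ) (δ : ℝ) (l : Fin p) (hl : d k' ≤ d l) :
    (volume.withDensity fun z => ENNReal.ofReal (singularValueWeight v n δ d k z))
      (levelInterval d l k) =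
    ENNReal.ofReal (∫ z in levelInterval d l k, singularValueWeight v n δ d k z) := by
  rw [withDensity_apply _ (isOpen_levelInterval d l k).measurableSet,
    ofReal_integral_eq_lintegral_ofReal (integrable_singularValueWeight hv n δ d k).restrict]
  refine ae_restrict_of_forall_mem (isOpen_levelInterval d l k).measurableSet fun z hz => ?_
  exact (singularValueWeight_pos hk hd h₀ ⟨hl.trans_lt hz.1, hz.2⟩ n δ).le

theorem isProbabilityMeasure_singularValueLaw (hv : v ≠ 0) {d : Fin p → ℝ} (hk : k ⋖ k')
    (hd : Antitone d) (h₀ : ∀ i, 0 ≤ d i) (n : ℕ) (δ : ℝ) (hne : (levelInterval d k' k).Nonempty) :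
    IsProbabilityMeasure (singularValueLaw v n δ d k k') := by
  refine cond_isProbabilityMeasure_of_finite ?_ ?_
  · have hsupport : levelInterval d k' k ⊆
        {z | ENNReal.ofReal (singularValueWeight v n δ d k z) ≠ 0} ∩ levelInterval d k' k :=
      fun z hz => ⟨(ENNReal.ofReal_pos.2 (singularValueWeight_pos hk hd h₀ hz n δ)).ne', hz⟩
    rw [Ne, withDensity_apply_eq_zero
      (continuous_singularValueWeight v n δ d k).measurable.ennreal_ofReal]
    exact fun h => ((isOpen_levelInterval d k' k).measure_pos volume hne).ne'
      (measure_mono_null hsupport h)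
  · rw [withDensity_singularValueWeight_levelInterval hv hk hd h₀ n δ k' le_rfl]
    exact ENNReal.ofReal_ne_top

theorem singularValueLaw_real_Ioi (hv : v ≠ 0) {d : Fin p → ℝ} (hk : k ⋖ k')
    (hd : Antitone d) (h₀ : ∀ i, 0 ≤ d i) (n : ℕ) (δ : ℝ) :
    (singularValueLaw v n δ d k k').real (Set.Ioi (d k)) =
      (∫ z in levelInterval d k k, singularValueWeight v n δ d k z) /
        ∫ z in levelInterval d k' k, singularValueWeight v n δ d k z := by
  have hinter : levelInterval d k' k ∩ Set.Ioi (d k) = levelInterval d k k := by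
    ext z
    exact ⟨fun hz => ⟨hz.2, hz.1.2⟩, fun hz => ⟨⟨(hd hk.le).trans_lt hz.1, hz.2⟩, hz.1⟩⟩
  have hnonneg (l) (hl : d k' ≤ d l) :
      0 ≤ ∫ z in levelInterval d l k, singularValueWeight v n δ d k z :=
    setIntegral_nonneg (isOpen_levelInterval d l k).measurableSet fun z hz =>
      (singularValueWeight_pos hk hd h₀ ⟨hl.trans_lt hz.1, hz.2⟩ n δ).le
  rw [singularValueLaw, measureReal_def, cond_apply (isOpen_levelInterval d k' k).measurableSet,
    hinter, withDensity_singularValueWeight_levelInterval hv hk hd h₀ n δ k (hd hk.le),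
    withDensity_singularValueWeight_levelInterval hv hk hd h₀ n δ k' le_rfl, ENNReal.toReal_mul,
    ENNReal.toReal_inv, ENNReal.toReal_ofReal (hnonneg k (hd hk.le)),
    ENNReal.toReal_ofReal (hnonneg k' le_rfl), div_eq_inv_mul]

/-- The density of `singularValueLaw`, the next smaller singular value having index `k'`. -/
noncomputable def singularValuePDF (v : NNReal) (n : ℕ) (δ : ℝ) (d : Fin p → ℝ) (k k' : Fin p)
    (z : ℝ) : ℝ≥0∞ :=
  (levelInterval d k' k).indicator (fun z => ENNReal.ofReal (singularValueWeight v n δ d k z)) z /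
    ∫⁻ y, (levelInterval d k' k).indicator
      (fun y => ENNReal.ofReal (singularValueWeight v n δ d k y)) y

theorem singularValuePDF_add_smul_single (v : NNReal) (n : ℕ) (δ : ℝ) (d : Fin p → ℝ)
    (hk : k ≠ k') (s : ℝ) :
    singularValuePDF v n δ (d + s • Pi.single k 1) k k' = singularValuePDF v n δ d k k' := by
  ext z
  simp only [singularValuePDF, singularValueWeight_add_smul_single,
    levelInterval_add_smul_single d hk.symm]

theorem measurable_singularValuePDF (v : NNReal) (n : ℕ) (k k' : Fin p) :
    Measurable fun x : (ℝ × (Fin p → ℝ)) × ℝ => singularValuePDF v n x.1.1 x.1.2 k k' x.2 := by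
  have hset : MeasurableSet {x : (ℝ × (Fin p → ℝ)) × ℝ | x.2 ∈ levelInterval x.1.2 k' k} := by
    unfold levelInterval
    measurability
  have hweight : Measurable fun x : (ℝ × (Fin p → ℝ)) × ℝ =>
      ENNReal.ofReal (singularValueWeight v n x.1.1 x.1.2 k x.2) := by
    unfold singularValueWeight
    fun_prop
  have hnum : Measurable fun x : (ℝ × (Fin p → ℝ)) × ℝ => (levelInterval x.1.2 k' k).indicator
      (fun z => ENNReal.ofReal (singularValueWeight v n x.1.1 x.1.2 k z)) x.2 :=
    hweight.indicator hset
  exact hnum.div (hnum.lintegral_prod_right'.comp measurable_fst)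

theorem singularValueLaw_eq_withDensity (v : NNReal) (n : ℕ) (δ : ℝ) (d : Fin p → ℝ)
    (k k' : Fin p) :
    singularValueLaw v n δ d k k' = volume.withDensity (singularValuePDF v n δ d k k') := by
  have hI := (isOpen_levelInterval d k' k).measurableSet
  have hmeas := (continuous_singularValueWeight v n δ d k).measurable.ennreal_ofReal
  ext s hs
  rw [singularValueLaw, cond_apply hI, withDensity_apply _ (hI.inter hs), withDensity_apply _ hI,
    withDensity_apply _ hs, ← setLIntegral_indicator hI, ← lintegral_indicator hI,
    ← lintegral_const_mul _ (hmeas.indicator hI)]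
  simp only [singularValuePDF, div_eq_mul_inv, mul_comm]

end SingularValueLaw

section HeatBath

variable {m : Type*} [Fintype m] {p : ℕ} {k k' : Fin p} {s : ℝ} {Y : m → Fin p → ℝ}

theorem sum_mul_eq_trace_mul_transpose {n : Type*} [Fintype n] (M N : Matrix m n ℝ) :
    ∑ i, ∑ j, M i j * N i j = (M * Nᵀ).trace := by
  simp [trace, Matrix.mul_apply]

theorem sum_mul_mul_diagonal_mul {U : Matrix m (Fin p) ℝ} {V : Matrix (Fin p) (Fin p) ℝ}
    (hU : Uᵀ * U = 1) (hV : Vᵀ * V = 1) (a b : Fin p → ℝ) :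
    ∑ i, ∑ j, (U * diagonal a * Vᵀ) i j * (U * diagonal b * Vᵀ) i j = ∑ l, a l * b l := by
  rw [sum_mul_eq_trace_mul_transpose, conj_mul_transpose_conj hV, trace_mul_cycle, hU,
    Matrix.one_mul, diagonal_transpose, diagonal_mul_diagonal, trace_diagonal]

theorem sum_svdComponent_sq (hp : p ≤ Fintype.card m) (hY : Y ∈ simpleLocus m k) :
    ∑ i, ∑ j, svdComponent k Y i j ^ 2 = 1 := by
  obtain ⟨U, V, h⟩ := exists_isSVD hp (of Y)
  have := sum_mul_mul_diagonal_mul h.left_orthonormal h.right_orthonormal (Pi.single k 1)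
    (Pi.single k 1)
  simpa [← h.svdComponent_eq hY, sq, Pi.single_apply] using this

theorem sum_svdComponent_mul_self (hp : p ≤ Fintype.card m) (hY : Y ∈ simpleLocus m k) :
    ∑ i, ∑ j, svdComponent k Y i j * Y i j = singularValue (of Y) k := by
  obtain ⟨U, V, h⟩ := exists_isSVD hp (of Y)
  have := sum_mul_mul_diagonal_mul h.left_orthonormal h.right_orthonormal (Pi.single k 1)
    (singularValue (of Y))
  simpa [← h.svdComponent_eq hY, ← h.eq_mul, Pi.single_apply] using this

/-- The number `u_kᵀ B v_k`, where `u_k` and `v_k` are the `k`-th singular vectors of `Y`. -/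
noncomputable def projectedMean (k : Fin p) (B : Matrix m (Fin p) ℝ) (Y : m → Fin p → ℝ) : ℝ :=
  ∑ i, ∑ j, svdComponent k Y i j * B i j

theorem IsSVD.projectedMean_eq {U : Matrix m (Fin p) ℝ} {V : Matrix (Fin p) (Fin p) ℝ}
    {d : Fin p → ℝ} (h : IsSVD (of Y) U d V) (hY : Y ∈ simpleLocus m k) (B : Matrix m (Fin p) ℝ) :
    projectedMean k B Y = ∑ i, ∑ j, U i k * B i j * V j k := by
  have hentry (i j) : svdComponent k Y i j = U i k * V j k := by
    simpa [Matrix.mul_apply, diagonal_apply, Pi.single_apply, Finset.sum_ite_eq] using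
      congrFun₂ (h.svdComponent_eq hY) i j
  simp only [projectedMean, hentry, mul_right_comm]

theorem sum_shiftSingularValue_sub_sq (hp : p ≤ Fintype.card m) (hY : Y ∈ simpleLocus m k)
    (B : Matrix m (Fin p) ℝ) (s : ℝ) :
    ∑ i, ∑ j, (Y i j - B i j) ^ 2 + (singularValue (of Y) k + s - projectedMean k B Y) ^ 2 =
      ∑ i, ∑ j, (shiftSingularValue k s Y i j - B i j) ^ 2 +
        (singularValue (of Y) k - projectedMean k B Y) ^ 2 := by
  have hexpand (i j) : (shiftSingularValue k s Y i j - B i j) ^ 2 = (Y i j - B i j) ^ 2 +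
      2 * s * (svdComponent k Y i j * Y i j) - 2 * s * (svdComponent k Y i j * B i j) +
        s ^ 2 * svdComponent k Y i j ^ 2 := by
    simp only [shiftSingularValue, Pi.add_apply, Pi.smul_apply, smul_eq_mul]
    ring
  simp only [hexpand, Finset.sum_add_distrib, Finset.sum_sub_distrib, ← Finset.mul_sum,
    sum_svdComponent_sq hp hY, sum_svdComponent_mul_self hp hY]
  rw [projectedMean]
  ring

theorem gaussianMatrixPDF_mul_singularValueWeight (hp : p ≤ Fintype.card m)
    (hY : Y ∈ shiftDomain m k k' s) (B : Matrix m (Fin p) ℝ) (v : NNReal) :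
    gaussianMatrixPDF B v Y * singularValueWeight v (Fintype.card m - p) (projectedMean k B Y)
        (singularValue (of Y)) k (singularValue (of Y) k + s) =
      |(ContinuousLinearMap.id ℝ (m → Fin p → ℝ) + s • fderiv ℝ (svdComponent k) Y).det| *
        (gaussianMatrixPDF B v (shiftSingularValue k s Y) *
          singularValueWeight v (Fintype.card m - p) (projectedMean k B Y) (singularValue (of Y)) k
            (singularValue (of Y) k)) := by
  have hpos : 0 < singularValue (of Y) k := hY.1.1
  have hpos' : 0 < singularValue (of Y) k + s := (singularValue_nonneg _ k').trans_lt hY.2.1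
  have hgauss := exp_mul_gaussianMatrixPDF B (v := v) (sum_shiftSingularValue_sub_sq hp hY.1 B s)
  have hne : ∏ j ∈ Finset.univ.erase k,
      |singularValue (of Y) k ^ 2 - singularValue (of Y) j ^ 2| ≠ 0 :=
    Finset.prod_ne_zero_iff.2 fun j hj =>
      abs_ne_zero.2 (sq_sub_sq_singularValue_ne_zero hY.1 j (Finset.ne_of_mem_erase hj))
  rw [abs_det_id_add_smul_fderiv_svdComponent hp hY.1, abs_mul, abs_of_pos (by positivity),
    Finset.abs_prod]
  simp only [abs_div, Finset.prod_div_distrib, div_pow, singularValueWeight]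
  simp only [neg_div] at hgauss ⊢
  field_simp
  linear_combination (∏ j ∈ Finset.univ.erase k,
    |(singularValue (of Y) k + s) ^ 2 - singularValue (of Y) j ^ 2|) * hgauss

theorem measurable_singularValue (hp : p ≤ Fintype.card m) :
    Measurable fun Y : m → Fin p → ℝ => singularValue (of Y) :=
  measurable_pi_lambda _ fun j => (continuous_singularValue hp j).measurable

theorem measurable_svdComponent (hp : p ≤ Fintype.card m) (k : Fin p) :
    Measurable (svdComponent k : (m → Fin p → ℝ) → m → Fin p → ℝ) := by
  classical
  have hcont : ContinuousOn (svdComponent k) (simpleLocus m k) := fun Y hY =>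
    (differentiableAt_svdComponent hp hY).continuousAt.continuousWithinAt
  convert! hcont.measurable_piecewise (continuousOn_const (c := 0))
    (isOpen_simpleLocus hp k).measurableSet using 1
  ext1 Y
  by_cases hY : Y ∈ simpleLocus m k <;> simp [hY, svdComponent_of_notMem]

theorem measurable_projectedMean (hp : p ≤ Fintype.card m) (k : Fin p)
    (B : Matrix m (Fin p) ℝ) : Measurable (projectedMean k B) := by
  have := measurable_svdComponent (m := m) hp k
  unfold projectedMean
  fun_prop

theorem measurableSet_shiftDomain (hp : p ≤ Fintype.card m) (k k' : Fin p) (s : ℝ) :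
    MeasurableSet (shiftDomain m k k' s) := by
  have := measurable_singularValue (m := m) hp
  have := (isOpen_simpleLocus (m := m) hp k).measurableSet
  unfold shiftDomain levelInterval
  measurability

theorem projectedMean_shiftSingularValue (hp : p ≤ Fintype.card m) (hk : k ⋖ k')
    (hY : Y ∈ shiftDomain m k k' s) (B : Matrix m (Fin p) ℝ) :
    projectedMean k B (shiftSingularValue k s Y) = projectedMean k B Y := by
  simp only [projectedMean, svdComponent_shiftSingularValue hp hk hY]

/-- The conditional density of the `k`-th singular value given the rest of the singular value
decomposition of `Y`, for a Gaussian matrix with mean `B` and independent entries of variance `v`.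
It is the transition density of the heat bath that resamples that singular value. -/
noncomputable def heatBathPDF (B : Matrix m (Fin p) ℝ) (v : NNReal) (k k' : Fin p)
    (Y : m → Fin p → ℝ) : ℝ → ℝ≥0∞ :=
  singularValuePDF v (Fintype.card m - p) (projectedMean k B Y) (singularValue (of Y)) k k'

theorem heatBathPDF_shiftSingularValue (hp : p ≤ Fintype.card m) (hk : k ⋖ k')
    (hY : Y ∈ shiftDomain m k k' s) (B : Matrix m (Fin p) ℝ) (v : NNReal) :
    heatBathPDF B v k k' (shiftSingularValue k s Y) = heatBathPDF B v k k' Y := by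
  rw [heatBathPDF, projectedMean_shiftSingularValue hp hk hY,
    singularValue_shiftSingularValue hp hk hY, singularValuePDF_add_smul_single _ _ _ _ hk.ne,
    heatBathPDF]

theorem heatBathPDF_of_notMem (hY : Y ∈ simpleLocus m k) (hs : Y ∉ shiftDomain m k k' s)
    (B : Matrix m (Fin p) ℝ) (v : NNReal) :
    heatBathPDF B v k k' Y (singularValue (of Y) k + s) = 0 := by
  rw [heatBathPDF, singularValuePDF, Set.indicator_of_notMem fun h => hs ⟨hY, h⟩, ENNReal.zero_div]

theorem gaussianMatrixPDF_mul_heatBathPDF (hp : p ≤ Fintype.card m) (hk : k ⋖ k')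
    (hY : Y ∈ shiftDomain m k k' s) (B : Matrix m (Fin p) ℝ) (v : NNReal) :
    ENNReal.ofReal (gaussianMatrixPDF B v Y) *
        heatBathPDF B v k k' Y (singularValue (of Y) k + s) =
      ENNReal.ofReal
          |(ContinuousLinearMap.id ℝ (m → Fin p → ℝ) + s • fderiv ℝ (svdComponent k) Y).det| *
        (ENNReal.ofReal (gaussianMatrixPDF B v (shiftSingularValue k s Y)) *
          heatBathPDF B v k k' Y (singularValue (of Y) k)) := by
  have hnonneg := gaussianMatrixPDF_nonneg B v
  simp only [heatBathPDF, singularValuePDF, Set.indicator_of_mem hY.2, ← mul_div_assoc,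
    Set.indicator_of_mem (singularValue_mem_levelInterval hk.lt hY.1)]
  rw [← ENNReal.ofReal_mul (hnonneg _), ← ENNReal.ofReal_mul (hnonneg _),
    ← ENNReal.ofReal_mul (abs_nonneg _),
    gaussianMatrixPDF_mul_singularValueWeight hp hY]

theorem setLIntegral_simpleLocus_mul_heatBathPDF (B : Matrix m (Fin p) ℝ) (v : NNReal)
    (hp : p ≤ Fintype.card m) (s : ℝ) (g : (m → Fin p → ℝ) → ℝ≥0∞) :
    ∫⁻ Y in simpleLocus m k, g Y * heatBathPDF B v k k' Y (singularValue (of Y) k + s) =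
      ∫⁻ Y in shiftDomain m k k' s,
        g Y * heatBathPDF B v k k' Y (singularValue (of Y) k + s) := by
  rw [← lintegral_indicator (isOpen_simpleLocus hp k).measurableSet,
    ← lintegral_indicator (measurableSet_shiftDomain hp k k' s)]
  congr with Y
  by_cases hs : Y ∈ shiftDomain m k k' s
  · rw [Set.indicator_of_mem hs, Set.indicator_of_mem hs.1]
  · rw [Set.indicator_of_notMem hs, Set.indicator_apply_eq_zero]
    exact fun hY => by rw [heatBathPDF_of_notMem hY hs, mul_zero]

theorem setLIntegral_simpleLocus_comp_shiftSingularValue (hp : p ≤ Fintype.card m) (hk : k ⋖ k')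
    (B : Matrix m (Fin p) ℝ) (v : NNReal) (s : ℝ) (g : (m → Fin p → ℝ) → ℝ≥0∞) :
    ∫⁻ Y in simpleLocus m k, ENNReal.ofReal (gaussianMatrixPDF B v Y) *
        g (shiftSingularValue k s Y) * heatBathPDF B v k k' Y (singularValue (of Y) k + s) =
      ∫⁻ Y in simpleLocus m k, ENNReal.ofReal (gaussianMatrixPDF B v Y) * g Y *
        heatBathPDF B v k k' Y (singularValue (of Y) k + -s) := by
  rw [setLIntegral_simpleLocus_mul_heatBathPDF B v hp,
    setLIntegral_simpleLocus_mul_heatBathPDF B v hp, ← (bijOn_shiftSingularValue hp hk s).image_eq,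
    lintegral_image_eq_lintegral_abs_det_fderiv_mul volume (measurableSet_shiftDomain hp k k' s)
      (fun Y hY => (hasFDerivAt_shiftSingularValue hp hY.1).hasFDerivWithinAt)
      (bijOn_shiftSingularValue hp hk s).injOn]
  refine setLIntegral_congr_fun (measurableSet_shiftDomain hp k k' s) fun Y hY => ?_
  simp only [heatBathPDF_shiftSingularValue hp hk hY, singularValue_shiftSingularValue hp hk hY]
  rw [mul_right_comm, gaussianMatrixPDF_mul_heatBathPDF hp hk hY]
  simp only [Pi.add_apply, Pi.smul_apply, Pi.single_eq_same, smul_eq_mul, mul_one,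
    add_neg_cancel_right]
  ring

end HeatBath

section Coverage

variable {m : Type*} [Fintype m] {p : ℕ} {k k' : Fin p} {Y : m → Fin p → ℝ} {v : NNReal}

/-- The law with density `heatBathPDF`. -/
noncomputable def heatBathLaw (B : Matrix m (Fin p) ℝ) (v : NNReal) (k k' : Fin p)
    (Y : m → Fin p → ℝ) : Measure ℝ :=
  singularValueLaw v (Fintype.card m - p) (projectedMean k B Y) (singularValue (of Y)) k k'

theorem measurable_heatBathPDF (hp : p ≤ Fintype.card m) (B : Matrix m (Fin p) ℝ) (v : NNReal)
    (k k' : Fin p) :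
    Measurable (Function.uncurry (heatBathPDF B v k k')) :=
  (measurable_singularValuePDF v _ k k').comp
    ((((measurable_projectedMean hp k B).comp measurable_fst).prodMk
      ((measurable_singularValue hp).comp measurable_fst)).prodMk measurable_snd)

theorem heatBathLaw_eq_withDensity (B : Matrix m (Fin p) ℝ) (v : NNReal) (k k' : Fin p)
    (Y : m → Fin p → ℝ) :
    heatBathLaw B v k k' Y = volume.withDensity (heatBathPDF B v k k' Y) :=
  singularValueLaw_eq_withDensity _ _ _ _ _ _

theorem isProbabilityMeasure_heatBathLaw (hv : v ≠ 0) (hk : k ⋖ k') (hY : Y ∈ simpleLocus m k)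
    (B : Matrix m (Fin p) ℝ) : IsProbabilityMeasure (heatBathLaw B v k k' Y) :=
  isProbabilityMeasure_singularValueLaw hv hk (singularValue_antitone _) (singularValue_nonneg _) _
    _ ⟨_, singularValue_mem_levelInterval hk.lt hY⟩

theorem lintegral_heatBathPDF (hv : v ≠ 0) (hk : k ⋖ k') (hY : Y ∈ simpleLocus m k)
    (B : Matrix m (Fin p) ℝ) : ∫⁻ z, heatBathPDF B v k k' Y z = 1 := by
  have := isProbabilityMeasure_heatBathLaw hv hk hY B
  rw [← setLIntegral_univ, ← withDensity_apply _ .univ, ← heatBathLaw_eq_withDensity, measure_univ]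

theorem measurable_shiftSingularValue (hp : p ≤ Fintype.card m) (k : Fin p) :
    Measurable (Function.uncurry (shiftSingularValue (m := m) k)) :=
  measurable_snd.add (measurable_fst.smul ((measurable_svdComponent hp k).comp measurable_snd))

theorem lintegral_heatBathLaw (hp : p ≤ Fintype.card m) (B : Matrix m (Fin p) ℝ) (v : NNReal)
    {g : (m → Fin p → ℝ) → ℝ≥0∞} (hg : Measurable g) (Y : m → Fin p → ℝ) :
    ∫⁻ z, g (shiftSingularValue k (z - singularValue (of Y) k) Y) ∂heatBathLaw B v k k' Y =
      ∫⁻ s, g (shiftSingularValue k s Y) *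
        heatBathPDF B v k k' Y (singularValue (of Y) k + s) := by
  have hpdf := (measurable_heatBathPDF hp B v k k').of_uncurry_left (x := Y)
  have hshift := (measurable_shiftSingularValue hp k).of_uncurry_right (y := Y)
  rw [heatBathLaw_eq_withDensity, lintegral_withDensity_eq_lintegral_mul _ hpdf
    (g := fun z => g (shiftSingularValue k (z - singularValue (of Y) k) Y))
    (hg.comp (hshift.comp (measurable_id.sub_const _))),
    ← lintegral_add_left_eq_self _ (singularValue (of Y) k)]
  simp [mul_comm]

theorem setLIntegral_lintegral_heatBathLaw (hp : p ≤ Fintype.card m) (hk : k ⋖ k') (hv : v ≠ 0)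
    (B : Matrix m (Fin p) ℝ) {g : (m → Fin p → ℝ) → ℝ≥0∞} (hg : Measurable g) :
    ∫⁻ Y in simpleLocus m k, ENNReal.ofReal (gaussianMatrixPDF B v Y) *
        ∫⁻ z, g (shiftSingularValue k (z - singularValue (of Y) k) Y) ∂heatBathLaw B v k k' Y =
      ∫⁻ Y in simpleLocus m k, ENNReal.ofReal (gaussianMatrixPDF B v Y) * g Y := by
  let f (Y : m → Fin p → ℝ) := ENNReal.ofReal (gaussianMatrixPDF B v Y)
  let q (Y : m → Fin p → ℝ) (s : ℝ) := heatBathPDF B v k k' Y (singularValue (of Y) k + s)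
  have hf : Measurable f := (continuous_gaussianMatrixPDF B).measurable.ennreal_ofReal
  have hq : Measurable (Function.uncurry q) := by
    have := (measurable_pi_apply k).comp (measurable_singularValue (m := m) hp)
    exact (measurable_heatBathPDF hp B v k k').comp
      (measurable_fst.prodMk ((this.comp measurable_fst).add measurable_snd))
  have hshift := measurable_shiftSingularValue (m := m) hp k
  calc ∫⁻ Y in simpleLocus m k, f Y *
        ∫⁻ z, g (shiftSingularValue k (z - singularValue (of Y) k) Y) ∂heatBathLaw B v k k' Y
      = ∫⁻ Y in simpleLocus m k, ∫⁻ s, f Y * g (shiftSingularValue k s Y) * q Y s := by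
        refine lintegral_congr fun Y => ?_
        have : Measurable fun s => g (shiftSingularValue k s Y) * q Y s :=
          (hg.comp hshift.of_uncurry_right).mul hq.of_uncurry_left
        simp only [mul_assoc]
        rw [lintegral_const_mul _ this, lintegral_heatBathLaw hp B v hg]
    _ = ∫⁻ s, ∫⁻ Y in simpleLocus m k, f Y * g (shiftSingularValue k s Y) * q Y s :=
        lintegral_lintegral_swap (by fun_prop)
    _ = ∫⁻ s, ∫⁻ Y in simpleLocus m k, f Y * g Y * q Y (-s) := by
        simp only [f, q, setLIntegral_simpleLocus_comp_shiftSingularValue hp hk B v]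
    _ = ∫⁻ s, ∫⁻ Y in simpleLocus m k, f Y * g Y * q Y s :=
        lintegral_neg_eq_self fun s => ∫⁻ Y in simpleLocus m k, f Y * g Y * q Y s
    _ = ∫⁻ Y in simpleLocus m k, ∫⁻ s, f Y * g Y * q Y s :=
        (lintegral_lintegral_swap (by fun_prop)).symm
    _ = ∫⁻ Y in simpleLocus m k, f Y * g Y := by
        refine setLIntegral_congr_fun (isOpen_simpleLocus hp k).measurableSet fun Y hY => ?_
        have : ∫⁻ s, q Y s = 1 := (lintegral_add_left_eq_self _ _).trans
          (lintegral_heatBathPDF hv hk hY B)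
        rw [lintegral_const_mul _ hq.of_uncurry_left, this, mul_one]

theorem lintegral_lintegral_heatBathLaw (hp : p ≤ Fintype.card m) (hk : k ⋖ k') (hv : v ≠ 0)
    (B : Matrix m (Fin p) ℝ) {g : (m → Fin p → ℝ) → ℝ≥0∞} (hg : Measurable g) :
    ∫⁻ Y, ∫⁻ z, g (shiftSingularValue k (z - singularValue (of Y) k) Y) ∂heatBathLaw B v k k' Y
        ∂gaussianMatrix B v =
      ∫⁻ Y, g Y ∂gaussianMatrix B v := by
  have hf : Measurable fun Y => ENNReal.ofReal (gaussianMatrixPDF B v Y) :=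
    (continuous_gaussianMatrixPDF B).measurable.ennreal_ofReal
  have := setLIntegral_lintegral_heatBathLaw hp hk hv B hg
  rw [Measure.restrict_eq_self_of_ae_mem (ae_mem_simpleLocus hp hk.lt)] at this
  simpa only [gaussianMatrix_eq_withDensity B hv, Pi.mul_apply,
    lintegral_withDensity_eq_lintegral_mul_non_measurable _ hf
      (.of_forall fun _ => ENNReal.ofReal_lt_top)] using this

theorem heatBathLaw_shiftSingularValue (hp : p ≤ Fintype.card m) (hk : k ⋖ k') {s : ℝ}
    (hY : Y ∈ shiftDomain m k k' s) (B : Matrix m (Fin p) ℝ) (v : NNReal) :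
    heatBathLaw B v k k' (shiftSingularValue k s Y) = heatBathLaw B v k k' Y := by
  simp only [heatBathLaw_eq_withDensity, heatBathPDF_shiftSingularValue hp hk hY]

/-- The random variable `S_{k,Λ̃_k}`: the probability, under `heatBathLaw`, that a resampled `k`-th
singular value exceeds the observed one. -/
noncomputable def heatBathTail (B : Matrix m (Fin p) ℝ) (v : NNReal) (k k' : Fin p)
    (Y : m → Fin p → ℝ) : ℝ :=
  (heatBathLaw B v k k' Y).real (Set.Ioi (singularValue (of Y) k))

theorem measurable_heatBathTail (hp : p ≤ Fintype.card m) (B : Matrix m (Fin p) ℝ) (v : NNReal)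
    (k k' : Fin p) : Measurable (heatBathTail B v k k') := by
  have hd : Measurable fun Y : m → Fin p → ℝ => singularValue (of Y) k :=
    (measurable_pi_apply k).comp (measurable_singularValue hp)
  have hset : MeasurableSet {x : (m → Fin p → ℝ) × ℝ | singularValue (of x.1) k < x.2} :=
    measurableSet_lt (hd.comp measurable_fst) measurable_snd
  have := ((measurable_heatBathPDF hp B v k k').indicator hset).lintegral_prod_right' (ν := volume)
  convert! this.ennreal_toReal using 2 with Y
  rw [heatBathTail, measureReal_def, heatBathLaw_eq_withDensity, withDensity_apply _
    measurableSet_Ioi, ← lintegral_indicator measurableSet_Ioi]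
  rfl

theorem heatBathTail_shiftSingularValue (hp : p ≤ Fintype.card m) (hk : k ⋖ k')
    (hY : Y ∈ simpleLocus m k) (B : Matrix m (Fin p) ℝ) (v : NNReal) {z : ℝ}
    (hz : z ∈ levelInterval (singularValue (of Y)) k' k) :
    heatBathTail B v k k' (shiftSingularValue k (z - singularValue (of Y) k) Y) =
      (heatBathLaw B v k k' Y).real (Set.Ioi z) := by
  have hY' : Y ∈ shiftDomain m k k' (z - singularValue (of Y) k) := ⟨hY, by simpa using hz⟩
  rw [heatBathTail, heatBathLaw_shiftSingularValue hp hk hY',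
    singularValue_shiftSingularValue hp hk hY']
  simp

theorem ae_mem_levelInterval_heatBathLaw (B : Matrix m (Fin p) ℝ) (v : NNReal) (k k' : Fin p)
    (Y : m → Fin p → ℝ) :
    ∀ᵐ z ∂heatBathLaw B v k k' Y, z ∈ levelInterval (singularValue (of Y)) k' k :=
  ae_cond_mem (isOpen_levelInterval _ _ _).measurableSet

theorem heatBathLaw_lt_min_heatBathTail (hp : p ≤ Fintype.card m) (hk : k ⋖ k') (hv : v ≠ 0)
    (hY : Y ∈ simpleLocus m k) (B : Matrix m (Fin p) ℝ) {α : ℝ} (h₀ : 0 < α) (h₁ : α < 1) :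
    heatBathLaw B v k k' Y {z |
        α / 2 < min (heatBathTail B v k k' (shiftSingularValue k (z - singularValue (of Y) k) Y))
          (1 - heatBathTail B v k k' (shiftSingularValue k (z - singularValue (of Y) k) Y))} =
      ENNReal.ofReal (1 - α) := by
  have := isProbabilityMeasure_heatBathLaw hv hk hY B
  have : NullSingletonClass (heatBathLaw B v k k' Y) := by unfold heatBathLaw; infer_instance
  rw [← measure_lt_min_real_Ioi (heatBathLaw B v k k' Y) h₀ h₁]
  refine measure_congr ?_
  filter_upwards [ae_mem_levelInterval_heatBathLaw B v k k' Y] with z hz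
  exact congrArg (α / 2 < ·) (by simp only [heatBathTail_shiftSingularValue hp hk hY B v hz])

theorem measurableSet_lt_min_heatBathTail (hp : p ≤ Fintype.card m) (B : Matrix m (Fin p) ℝ)
    (v : NNReal) (k k' : Fin p) (α : ℝ) :
    MeasurableSet {Y | α / 2 < min (heatBathTail B v k k' Y) (1 - heatBathTail B v k k' Y)} := by
  have := measurable_heatBathTail hp B v k k'
  measurability

theorem ae_gaussianMatrix_mem_simpleLocus (hp : p ≤ Fintype.card m) (hk : k < k') (hv : v ≠ 0)
    (B : Matrix m (Fin p) ℝ) : ∀ᵐ Y ∂gaussianMatrix B v, Y ∈ simpleLocus m k := by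
  rw [gaussianMatrix_eq_withDensity B hv]
  exact (withDensity_absolutelyContinuous _ _).ae_le (ae_mem_simpleLocus hp hk)

theorem gaussianMatrix_lt_min_heatBathTail (hp : p ≤ Fintype.card m) (hk : k ⋖ k') (hv : v ≠ 0)
    (B : Matrix m (Fin p) ℝ) {α : ℝ} (h₀ : 0 < α) (h₁ : α < 1) :
    gaussianMatrix B v
        {Y | α / 2 < min (heatBathTail B v k k' Y) (1 - heatBathTail B v k k' Y)} =
      ENNReal.ofReal (1 - α) := by
  have hT := measurableSet_lt_min_heatBathTail hp B v k k' α
  rw [← lintegral_indicator_one hT,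
    ← lintegral_lintegral_heatBathLaw hp hk hv B (measurable_one.indicator hT)]
  refine (lintegral_congr_ae (g := fun _ => ENNReal.ofReal (1 - α)) ?_).trans (by simp)
  filter_upwards [ae_gaussianMatrix_mem_simpleLocus hp hk.lt hv B] with Y hY
  have hshift : Measurable fun z => shiftSingularValue k (z - singularValue (of Y) k) Y :=
    (measurable_shiftSingularValue hp k).of_uncurry_right.comp (measurable_id.sub_const _)
  exact (lintegral_indicator_one (hshift hT)).trans
    (heatBathLaw_lt_min_heatBathTail hp hk hv hY B h₀ h₁)

theorem IsSVD.heatBathTail_eq {U : Matrix m (Fin p) ℝ} {d : Fin p → ℝ}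
    {V : Matrix (Fin p) (Fin p) ℝ} (h : IsSVD (of Y) U d V) (hk : k ⋖ k') (hv : v ≠ 0)
    (hY : Y ∈ simpleLocus m k) (B : Matrix m (Fin p) ℝ) :
    heatBathTail B v k k' Y =
      (∫ z in levelInterval d k k, singularValueWeight v (Fintype.card m - p)
        (∑ i, ∑ j, U i k * B i j * V j k) d k z) /
      ∫ z in levelInterval d k' k, singularValueWeight v (Fintype.card m - p)
        (∑ i, ∑ j, U i k * B i j * V j k) d k z := by
  rw [heatBathTail, heatBathLaw, singularValueLaw_real_Ioi hv hk (singularValue_antitone _)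
    (singularValue_nonneg _), h.projectedMean_eq hY, ← h.eq_singularValue]

theorem confidence_interval_exact_coverage_general (hk : k ⋖ k') (hv : v ≠ 0)
    (B : Matrix m (Fin p) ℝ) {α : ℝ} (h₀ : 0 < α) (h₁ : α < 1)
    {Ω : Type*} [MeasurableSpace Ω] {P : Measure Ω} {Y : Ω → m → Fin p → ℝ}
    {U : Ω → Matrix m (Fin p) ℝ} {d : Ω → Fin p → ℝ} {V : Ω → Matrix (Fin p) (Fin p) ℝ} {S : Ω → ℝ}
    (hY : HasLaw Y (gaussianMatrix B v) P)
    (hSVD : ∀ᵐ ω ∂P, IsSVD (of (Y ω)) (U ω) (d ω) (V ω))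
    (hS : ∀ᵐ ω ∂P, S ω =
      (∫ z in levelInterval (d ω) k k, singularValueWeight v (Fintype.card m - p)
        (∑ i, ∑ j, U ω i k * B i j * V ω j k) (d ω) k z) /
      ∫ z in levelInterval (d ω) k' k, singularValueWeight v (Fintype.card m - p)
        (∑ i, ∑ j, U ω i k * B i j * V ω j k) (d ω) k z) :
    P {ω | α / 2 < min (S ω) (1 - S ω)} = ENNReal.ofReal (1 - α) := by
  have := hY.isProbabilityMeasure
  have hp := hSVD.exists.choose_spec.card_le
  have hlocus := ae_of_ae_map hY.aemeasurable
    (hY.map_eq ▸ ae_gaussianMatrix_mem_simpleLocus hp hk.lt hv B)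
  rw [← gaussianMatrix_lt_min_heatBathTail hp hk hv B h₀ h₁,
    ← hY.measure_eq (measurableSet_lt_min_heatBathTail hp B v k k' α)]
  refine measure_congr ?_
  filter_upwards [hlocus, hSVD, hS] with ω hlocus hSVD hS
  refine congrArg (α / 2 < ·) ?_
  rw [hSVD.heatBathTail_eq hk hv hlocus, hS]

end Coverage

/-- **Exact coverage of the confidence interval `CI_k` (Section 2.4).**
Model: `Y = B + E ∈ ℝ^{N×p}` (`N > p ≥ 1`) with i.i.d. `N(0,σ²)` noise entries; `Y = U D Vᵀ`
a measurably chosen SVD with decreasing nonnegative singular values `d`.  Fix a zero-based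
index `k` with `k + 1 < p` and a level `α ∈ (0,1)`.  Let
`Λ̃ = U_kᵀ B V_k` and, for `δ ∈ ℝ`,
`S_{k,δ} = (∫_{d_k}^{d_{k-1}} e^{-(z-δ)²/(2σ²)} z^{N-p} ∏_{j≠k} |z²-d_j²| dz) /
           (∫_{d_{k+1}}^{d_{k-1}} e^{-(z-δ)²/(2σ²)} z^{N-p} ∏_{j≠k} |z²-d_j²| dz)`.
Then `P(Λ̃ ∈ CI_k) = P(min(S_{k,Λ̃}, 1 - S_{k,Λ̃}) > α/2) = 1 - α`.  The upper limit
`d_{k-1}` (convention `d_{-1} = ∞`) is encoded by `∀ j < k, z < d j`. -/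
theorem confidence_interval_exact_coverage
    (N p : ℕ) (hNp : p < N) (hp : 1 ≤ p)
    (σ : ℝ) (hσ : 0 < σ)
    (B : Matrix (Fin N) (Fin p) ℝ)
    (k : ℕ) (hk : k + 1 < p)
    (α : ℝ) (hα0 : 0 < α) (hα1 : α < 1)
    {Ω : Type} [MeasurableSpace Ω] (P : Measure Ω) [IsProbabilityMeasure P]
    (Y U : Ω → Fin N → Fin p → ℝ) (V : Ω → Fin p → Fin p → ℝ) (d : Ω → Fin p → ℝ)
    (hYm : Measurable Y) (hUm : Measurable U) (hVm : Measurable V) (hdm : Measurable d)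
    (hlaw : Measure.map Y P =
      Measure.pi (fun i : Fin N => Measure.pi (fun j : Fin p =>
        gaussianReal (B i j) ⟨σ ^ 2, sq_nonneg σ⟩)))
    (hSVD : ∀ ω, Matrix.of (Y ω) =
      Matrix.of (U ω) * Matrix.diagonal (d ω) * (Matrix.of (V ω))ᵀ)
    (hUorth : ∀ ω, (Matrix.of (U ω))ᵀ * Matrix.of (U ω) = 1)
    (hVorth : ∀ ω, (Matrix.of (V ω))ᵀ * Matrix.of (V ω) = 1)
    (hanti : ∀ ω, Antitone (d ω))
    (hnonneg : ∀ ω i, 0 ≤ d ω i)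
    (S : Ω → ℝ)
    (hS : ∀ ω, S ω =
      (∫ z in {z : ℝ | d ω ⟨k, by omega⟩ < z ∧ ∀ j : Fin p, (j : ℕ) < k → z < d ω j},
        Real.exp (-(z - ∑ i : Fin N, ∑ j : Fin p,
            U ω i ⟨k, by omega⟩ * B i j * V ω j ⟨k, by omega⟩) ^ 2 / (2 * σ ^ 2)) *
          z ^ (N - p) *
          ∏ j ∈ Finset.univ.erase (⟨k, by omega⟩ : Fin p), |z ^ 2 - d ω j ^ 2|) /
      (∫ z in {z : ℝ | d ω ⟨k + 1, by omega⟩ < z ∧ ∀ j : Fin p, (j : ℕ) < k → z < d ω j},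
        Real.exp (-(z - ∑ i : Fin N, ∑ j : Fin p,
            U ω i ⟨k, by omega⟩ * B i j * V ω j ⟨k, by omega⟩) ^ 2 / (2 * σ ^ 2)) *
          z ^ (N - p) *
          ∏ j ∈ Finset.univ.erase (⟨k, by omega⟩ : Fin p), |z ^ 2 - d ω j ^ 2|)) :
    P {ω | α / 2 < min (S ω) (1 - S ω)} = ENNReal.ofReal (1 - α) := by
  have hv : (⟨σ ^ 2, sq_nonneg σ⟩ : NNReal) ≠ 0 := fun h =>
    (pow_pos hσ 2).ne' (congrArg NNReal.toReal h)
  have hcov : (⟨k, by omega⟩ : Fin p) ⋖ ⟨k + 1, hk⟩ := by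
    simp [Fin.covBy_iff]
  refine confidence_interval_exact_coverage_general hcov hv B hα0 hα1
    ⟨hYm.aemeasurable, hlaw⟩
    (.of_forall fun ω => ⟨hSVD ω, hUorth ω, hVorth ω, hanti ω, hnonneg ω⟩)
    (.of_forall fun ω => ?_)
  rw [hS, Fintype.card_fin]
  rfl
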